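/- Suppose n ≥ 2 and 1 ≤ p < ∞. Let φ ∈ Möb(B), ψ = |Dφ|^{(n−2)/2}, and let W* denote the adjoint of W_{φ,ψ} acting on h^{p′}(B) under the duality pairing ⟨f,g⟩ = ∫_S f*(ζ) g*(ζ) dσ(ζ). Then W* P_y = ψ(y)·P_{φ(y)} for every y ∈ B. -/

import Mathlib

/-!
The extended Poisson kernel `P_x` reproduces boundary functions, and this determines `W* P_y`.
For `h ∈ h^q` with `q > 1` (which holds since `p < ∞`) and boundary function `h*`, one has
`h(x) = ∫ h* P_x dσ` (`poisson_bd`).  With `h = W* P_y` this gives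

  `W* P_y (x) = ⟨P_x, W* P_y⟩ = ⟨W P_x, P_y⟩ = ∫ (W P_x) P_y dσ = (W P_x)(y) = ψ(y) P_x(φ(y))`,

where the last integral is the Poisson formula for `W P_x`, a harmonic function continuous up to the
boundary; finally `P_x(φ(y)) = P_{φ(y)}(x)` by symmetry.

What has to be shown about `φ` is thus that `W P_x = ψ · (P_x ∘ φ)` is harmonic on the ball and
extends continuously to the closed ball.  A Möbius transformation is a similarity or an inversion
followed by a similarity (`mobForm_of_isMobiusHat`), so its conformal factor is explicit, and the
identity `‖φ(z) - φ(p)‖² = |Dφ(z)| |Dφ(p)| ‖z - p‖²` turns `ψ · (P_x ∘ φ)` into a Kelvin-type kernel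
`(α ‖z - p‖² + β·(z - p)) / ‖z - p‖ⁿ` (`polKer`), where `φ(p) = x / ‖x‖²` lies outside the closed
ball, hence so does `p` (`IsMobiusBall.wco_extPoisson`).  These kernels are harmonic off `p`.  The
points `x = 0` and the `x` whose `p` is infinite are recovered by continuity in `x`.

The Poisson formula rests on the surface measure, which is the normalized Hausdorff measure: it is
finite and nonzero by comparison with balls of hyperplanes, and invariant under rotations.  The
invariance makes the spherical Laplacian, a sum of squares of generators of rotations, symmetric
(`sphLap_symm`).  Hence, for harmonic `u, v`, the pairing `∫ u(rζ) v(sζ) dσ(ζ)` depends only on `rs`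
(`pairing_dil`).  Taking `v = P_η` with `‖η‖ = 1` and letting `s → 1` yields the Poisson formula for
dilates (`poisson_formula`); uniform integrability in `L^q` then gives it for boundary functions.
-/

open MeasureTheory Metric Set Filter
open scoped ENNReal NNReal Topology InnerProductSpace Classical

noncomputable section

/-- Euclidean space `ℝⁿ`. -/
abbrev Eucl (n : ℕ) := EuclideanSpace ℝ (Fin n)

/-- The open unit ball `B` in `ℝⁿ`. -/
def uBall (n : ℕ) : Set (Eucl n) := Metric.ball 0 1

/-- The unit sphere `S = ∂B` in `ℝⁿ`. -/
def uSphere (n : ℕ) : Set (Eucl n) := Metric.sphere 0 1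

/-- The normalized surface area measure `σ` on the unit sphere (as a measure on `ℝⁿ`
supported on `S`), normalized so that `σ(S) = 1`. -/
def sphMeasure (n : ℕ) : Measure (Eucl n) :=
  ((Measure.hausdorffMeasure ((n : ℝ) - 1) (uSphere n))⁻¹ : ℝ≥0∞) •
    (Measure.hausdorffMeasure ((n : ℝ) - 1) : Measure (Eucl n)).restrict (uSphere n)

/-- `i`-th standard basis vector of `ℝⁿ`. -/
def basisV (n : ℕ) (i : Fin n) : Eucl n := EuclideanSpace.single i 1

/-- The Laplacian `Δf(x) = ∑ᵢ ∂²f/∂xᵢ²(x)`. -/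
def lap {n : ℕ} {F : Type*} [NormedAddCommGroup F] [NormedSpace ℝ F]
    (f : Eucl n → F) (x : Eucl n) : F :=
  ∑ i : Fin n, iteratedFDeriv ℝ 2 f x ![basisV n i, basisV n i]

/-- `f` is harmonic on `s`: twice continuously differentiable with vanishing Laplacian. -/
def HarmOn {n : ℕ} {F : Type*} [NormedAddCommGroup F] [NormedSpace ℝ F]
    (f : Eucl n → F) (s : Set (Eucl n)) : Prop :=
  ContDiffOn ℝ 2 f s ∧ ∀ x ∈ s, lap f x = 0

/-- The Jacobian matrix `Dφ(x) = (∂φ⁽ⁱ⁾/∂xⱼ)` of a map `φ : ℝⁿ → ℝⁿ`. -/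
def jacMatrix {n : ℕ} (φ : Eucl n → Eucl n) (x : Eucl n) : Matrix (Fin n) (Fin n) ℝ :=
  Matrix.of fun i j => fderiv ℝ φ x (basisV n j) i

/-- `|Dφ(x)| := |J_φ(x)|^{1/n}`, where `J_φ` is the Jacobian determinant. -/
def normDeriv {n : ℕ} (φ : Eucl n → Eucl n) (x : Eucl n) : ℝ :=
  |(jacMatrix φ x).det| ^ ((n : ℝ)⁻¹)

/-- The weighted composition operator `W_{φ,ψ} f = ψ · (f ∘ φ)`. -/
def wco {n : ℕ} (φ : Eucl n → Eucl n) (ψ : Eucl n → ℂ) (f : Eucl n → ℂ) : Eucl n → ℂ :=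
  fun x => ψ x * f (φ x)

/-- The set of values `(∫_S |f(rζ)|^p dσ(ζ))^{1/p}`, `0 ≤ r < 1`. -/
def hpNormSet (n : ℕ) (p : ℝ) (f : Eucl n → ℂ) : Set ℝ :=
  (fun r : ℝ => (∫ ζ, ‖f (r • ζ)‖ ^ p ∂(sphMeasure n)) ^ (1 / p)) '' Set.Ico (0 : ℝ) 1

/-- The set of values `|f(x)|`, `x ∈ B`. -/
def hInfSet (n : ℕ) (f : Eucl n → ℂ) : Set ℝ := (fun x => ‖f x‖) '' uBall n

/-- Membership in the harmonic Hardy space `h^p(B)`, `1 ≤ p ≤ ∞`. -/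
def MemHp (n : ℕ) (p : ℝ≥0∞) (f : Eucl n → ℂ) : Prop :=
  HarmOn f (uBall n) ∧
    if p = ⊤ then BddAbove (hInfSet n f) else BddAbove (hpNormSet n p.toReal f)

/-- The `h^p(B)` norm, `1 ≤ p ≤ ∞`. -/
def hpNorm (n : ℕ) (p : ℝ≥0∞) (f : Eucl n → ℂ) : ℝ :=
  if p = ⊤ then sSup (hInfSet n f) else sSup (hpNormSet n p.toReal f)

/-- The operator norm of a map `T` on `h^p(B)`. -/
def opNormHp (n : ℕ) (p : ℝ≥0∞) (T : (Eucl n → ℂ) → (Eucl n → ℂ)) : ℝ :=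
  sInf {C : ℝ | 0 ≤ C ∧ ∀ f, MemHp n p f → hpNorm n p (T f) ≤ C * hpNorm n p f}

/-- The one-point compactification `ℝ̂ⁿ = ℝⁿ ∪ {∞}`. -/
abbrev EuclHat (n : ℕ) := OnePoint (Eucl n)

/-- Reflection in the sphere `S(a, r)`, as a self-map of `ℝ̂ⁿ`:
`x ↦ a + r²(x−a)/|x−a|²`, with `a ↦ ∞` and `∞ ↦ a`. -/
def sphereRefl (n : ℕ) (a : Eucl n) (r : ℝ) : EuclHat n → EuclHat n :=
  OnePoint.rec (↑a)
    (fun x => if x = a then OnePoint.infty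
      else ↑(a + (r ^ 2 / ‖x - a‖ ^ 2) • (x - a)))

/-- Reflection in the hyperplane `{x : x·a = t}` (`a` a unit vector), as a self-map of `ℝ̂ⁿ`:
`x ↦ x − 2(x·a − t)a`, with `∞ ↦ ∞`. -/
def hyperRefl (n : ℕ) (a : Eucl n) (t : ℝ) : EuclHat n → EuclHat n :=
  OnePoint.rec OnePoint.infty
    (fun x => ↑(x - (2 * (⟪x, a⟫_ℝ - t)) • a))

/-- A reflection of `ℝ̂ⁿ` in a sphere or a hyperplane. -/
def IsReflection (n : ℕ) (f : EuclHat n → EuclHat n) : Prop :=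
  (∃ a r, 0 < r ∧ f = sphereRefl n a r) ∨
    (∃ a t, ‖a‖ = 1 ∧ f = hyperRefl n a t)

/-- A Möbius transformation of `ℝ̂ⁿ`: a finite composition of reflections in
spheres or hyperplanes. -/
def IsMobiusHat (n : ℕ) (g : EuclHat n → EuclHat n) : Prop :=
  ∃ L : List (EuclHat n → EuclHat n), L ≠ [] ∧ (∀ f ∈ L, IsReflection n f) ∧
    g = L.foldr (· ∘ ·) id

/-- `φ : ℝⁿ → ℝⁿ` is, on `Ω`, the restriction of a Möbius transformation of `ℝ̂ⁿ`. -/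
def IsMobiusRestr (n : ℕ) (φ : Eucl n → Eucl n) (Ω : Set (Eucl n)) : Prop :=
  ∃ g : EuclHat n → EuclHat n, IsMobiusHat n g ∧ ∀ x ∈ Ω, g ↑x = ↑(φ x)

/-- `φ ∈ Möb(B)`: `φ` agrees, on an open neighborhood of the closed unit ball, with a
Möbius transformation of `ℝ̂ⁿ`, and `φ` maps `B` bijectively onto `B`.  (Such a `φ` is
the canonical extension of the Möbius transformation to the closed unit ball.) -/
def IsMobiusBall (n : ℕ) (φ : Eucl n → Eucl n) : Prop :=
  (∃ U : Set (Eucl n), IsOpen U ∧ Metric.closedBall 0 1 ⊆ U ∧ IsMobiusRestr n φ U) ∧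
    Set.BijOn φ (uBall n) (uBall n)

/-- The nontangential approach region `Γ_δ(ζ) = {x ∈ B : |x − ζ| < (δ/2)(1 − |x|²)}`. -/
def ntRegion (n : ℕ) (δ : ℝ) (ζ : Eucl n) : Set (Eucl n) :=
  {x | x ∈ uBall n ∧ ‖x - ζ‖ < δ / 2 * (1 - ‖x‖ ^ 2)}

/-- `g` has nontangential limit `L` at `ζ ∈ S`. -/
def HasNTLimit (n : ℕ) (g : Eucl n → ℂ) (ζ : Eucl n) (L : ℂ) : Prop :=
  ∀ δ : ℝ, 1 < δ → Filter.Tendsto g (nhdsWithin ζ (ntRegion n δ ζ)) (nhds L)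

/-- The Poisson kernel `P(x, ζ) = (1 − |x|²)/|x − ζ|ⁿ` for the unit ball. -/
def poissonK (n : ℕ) (x ζ : Eucl n) : ℝ := (1 - ‖x‖ ^ 2) / ‖x - ζ‖ ^ n

/-- The extended Poisson kernel `P_y(x) = (1 − |x|²|y|²)/(1 − 2x·y + |x|²|y|²)^{n/2}`. -/
def extPoisson (n : ℕ) (y x : Eucl n) : ℝ :=
  (1 - ‖x‖ ^ 2 * ‖y‖ ^ 2) / (1 - 2 * ⟪x, y⟫_ℝ + ‖x‖ ^ 2 * ‖y‖ ^ 2) ^ ((n : ℝ) / 2)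

/-- The Gauss hypergeometric function `₂F₁(a, b; c; r) = ∑ₖ (a)ₖ(b)ₖ/((c)ₖ k!) rᵏ`. -/
def gaussHyper (a b c r : ℝ) : ℝ :=
  ∑' k : ℕ, ((ascPochhammer ℝ k).eval a * (ascPochhammer ℝ k).eval b) /
    ((ascPochhammer ℝ k).eval c * (Nat.factorial k)) * r ^ k

/-- A linear operator on (the function class) `h^p(B)`. -/
def IsLinOnHp (n : ℕ) (p : ℝ≥0∞) (T : (Eucl n → ℂ) → (Eucl n → ℂ)) : Prop :=
  (∀ f, MemHp n p f → MemHp n p (T f)) ∧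
    (∀ f g, MemHp n p f → MemHp n p g → T (f + g) = T f + T g) ∧
    (∀ (c : ℂ) (f), MemHp n p f → T (c • f) = c • T f)

/-- A compact operator on `h^p(B)`: a linear operator mapping the unit ball of `h^p(B)`
to a totally bounded set. -/
def IsCompactOnHp (n : ℕ) (p : ℝ≥0∞) (K : (Eucl n → ℂ) → (Eucl n → ℂ)) : Prop :=
  IsLinOnHp n p K ∧
    ∀ ε : ℝ, 0 < ε → ∃ G : Finset (Eucl n → ℂ),
      ∀ f, MemHp n p f → hpNorm n p f ≤ 1 → ∃ g ∈ G, hpNorm n p (K f - g) ≤ ε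

/-- The essential norm of an operator `T` on `h^p(B)`: the distance, in operator norm,
from `T` to the compact operators on `h^p(B)`. -/
def essNormHp (n : ℕ) (p : ℝ≥0∞) (T : (Eucl n → ℂ) → (Eucl n → ℂ)) : ℝ :=
  sInf {c : ℝ | ∃ K, IsCompactOnHp n p K ∧ opNormHp n p (fun f => T f - K f) = c}

/-- The duality pairing `⟨f, g⟩ = ∫_S f* g* dσ`, relative to a boundary-function
assignment `bd`. -/
def hpPairing (n : ℕ) (bd : (Eucl n → ℂ) → (Eucl n → ℂ)) (f g : Eucl n → ℂ) : ℂ :=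
  ∫ ζ, bd f ζ * bd g ζ ∂(sphMeasure n)

end

/-! ### The normalized surface measure -/

/-- Stereographic projection from the pole `v` carries a ball of radius `2` in the hyperplane
`v^⊥` onto the closed hemisphere opposite to `v`. -/
lemma hemisphere_subset_stereo {n : ℕ} {v : Eucl n} (hv : ‖v‖ = 1) {x : Eucl n}
    (hx : ‖x‖ = 1) (hvx : ⟪v, x⟫_ℝ ≤ 0) :
    x ∈ (fun w : (ℝ ∙ v)ᗮ => stereoInvFunAux v (w : Eucl n)) '' closedBall 0 2 := by
  have hne : x ≠ v := by
    rintro rfl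
    rw [real_inner_self_eq_norm_sq, hv] at hvx
    norm_num at hvx
  refine ⟨stereoToFun v x, ?_, ?_⟩
  · rw [mem_closedBall_zero_iff, stereoToFun_apply, norm_smul]
    have h1 : ‖(ℝ ∙ v)ᗮ.orthogonalProjectionOnto x‖ ≤ 1 := by
      have := (ℝ ∙ v)ᗮ.norm_orthogonalProjectionOnto_apply_le x
      rwa [hx] at this
    have h2 : ‖(2 / (1 - innerSL ℝ v x) : ℝ)‖ ≤ 2 := by
      rw [innerSL_apply_apply, Real.norm_eq_abs, abs_of_nonneg (by apply div_nonneg <;> linarith)]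
      rw [div_le_iff₀ (by linarith)]
      linarith
    calc _ ≤ 2 * (1 : ℝ) := by gcongr
      _ = 2 := by norm_num
  · have := stereo_left_inv hv (x := ⟨x, by simpa using hx⟩) (by simpa using hne)
    exact congrArg Subtype.val this

lemma finrank_orth {n : ℕ} (hn : 2 ≤ n) {v : Eucl n} (hv : ‖v‖ = 1) :
    (Module.finrank ℝ (ℝ ∙ v)ᗮ : ℝ) = (n : ℝ) - 1 := by
  have : Fact (Module.finrank ℝ (Eucl n) = (n - 1) + 1) := ⟨by
    rw [finrank_euclideanSpace_fin]; omega⟩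
  have hv0 : v ≠ 0 := by
    rintro rfl
    simp at hv
  rw [Submodule.finrank_orthogonal_span_singleton (n := n - 1) hv0]
  rw [Nat.cast_sub (by omega)]; simp

lemma hausdorff_stereo_lt_top {n : ℕ} (hn : 2 ≤ n) {v : Eucl n} (hv : ‖v‖ = 1) :
    Measure.hausdorffMeasure ((n : ℝ) - 1)
      ((fun w : (ℝ ∙ v)ᗮ => stereoInvFunAux v (w : Eucl n)) '' closedBall 0 2) < ⊤ := by
  have hcd : ContDiff ℝ 1 (fun w : (ℝ ∙ v)ᗮ => stereoInvFunAux v (w : Eucl n)) :=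
    contDiff_stereoInvFunAux.comp (ℝ ∙ v)ᗮ.subtypeL.contDiff
  obtain ⟨K, hK⟩ := (hcd.locallyLipschitz.locallyLipschitzOn
    (s := closedBall (0 : (ℝ ∙ v)ᗮ) 2)).exists_lipschitzOnWith_of_compact
      (isCompact_closedBall _ _)
  have hd : (0 : ℝ) ≤ (n : ℝ) - 1 := by
    have : (2 : ℝ) ≤ n := by exact_mod_cast hn
    linarith
  refine (hK.hausdorffMeasure_image_le hd).trans_lt ?_
  refine ENNReal.mul_lt_top (ENNReal.rpow_lt_top_of_nonneg hd ENNReal.coe_ne_top) ?_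
  rw [← finrank_orth hn hv]
  exact (isCompact_closedBall _ _).measure_lt_top

lemma norm_basisV {n : ℕ} (i : Fin n) : ‖basisV n i‖ = 1 := by
  simp [basisV]

lemma hausdorff_sphere_ne_top {n : ℕ} (hn : 2 ≤ n) :
    Measure.hausdorffMeasure ((n : ℝ) - 1) (uSphere n) ≠ ⊤ := by
  set v := basisV n ⟨0, by omega⟩ with hvdef
  have hv : ‖v‖ = 1 := norm_basisV _
  have hv' : ‖-v‖ = 1 := by rw [norm_neg, hv]
  refine ((measure_mono ?_).trans_lt ((measure_union_le _ _).trans_lt (ENNReal.add_lt_top.2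
    ⟨hausdorff_stereo_lt_top hn hv, hausdorff_stereo_lt_top hn hv'⟩))).ne
  intro x hx
  have hx1 : ‖x‖ = 1 := by simpa [uSphere] using hx
  rcases le_total ⟪v, x⟫_ℝ 0 with h | h
  · exact Or.inl (hemisphere_subset_stereo hv hx1 h)
  · exact Or.inr (hemisphere_subset_stereo hv' hx1 (by rw [inner_neg_left]; linarith))

/-- Orthogonal projection to a hyperplane is `1`-Lipschitz and maps the sphere onto a ball of
positive `(n-1)`-dimensional measure. -/
lemma hausdorff_sphere_ne_zero {n : ℕ} (hn : 2 ≤ n) :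
    Measure.hausdorffMeasure ((n : ℝ) - 1) (uSphere n) ≠ 0 := by
  set v := basisV n ⟨0, by omega⟩ with hvdef
  have hv : ‖v‖ = 1 := norm_basisV _
  have hd : (0 : ℝ) ≤ (n : ℝ) - 1 := by
    have : (2 : ℝ) ≤ n := by exact_mod_cast hn
    linarith
  intro h0
  have hlip : LipschitzWith 1 (fun x : Eucl n => (ℝ ∙ v)ᗮ.orthogonalProjectionOnto x) := by
    refine LipschitzWith.of_dist_le_mul fun x y => ?_
    rw [dist_eq_norm, dist_eq_norm, ← map_sub]
    simpa using (ℝ ∙ v)ᗮ.norm_orthogonalProjectionOnto_apply_le (x - y)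
  have h1 := hlip.hausdorffMeasure_image_le hd (uSphere n)
  rw [h0, mul_zero] at h1
  have h2 : closedBall (0 : (ℝ ∙ v)ᗮ) 1 ⊆
      (fun x : Eucl n => (ℝ ∙ v)ᗮ.orthogonalProjectionOnto x) '' uSphere n := by
    intro w hw
    have hw1 : ‖w‖ ≤ 1 := by simpa using hw
    have hwv : ⟪(w : Eucl n), v⟫_ℝ = 0 :=
      (Submodule.mem_orthogonal_singleton_iff_inner_left).1 w.2
    refine ⟨(w : Eucl n) + √(1 - ‖w‖ ^ 2) • v, ?_, ?_⟩
    · have : ‖(w : Eucl n) + √(1 - ‖w‖ ^ 2) • v‖ ^ 2 = 1 := by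
        rw [norm_add_sq_real, inner_smul_right, hwv, norm_smul, hv, Real.norm_eq_abs, mul_one,
          sq_abs, Real.sq_sqrt (by nlinarith [norm_nonneg w])]
        simp
      have h := (pow_eq_one_iff_of_nonneg (norm_nonneg _) two_ne_zero).1 this
      simpa [uSphere] using h
    · simp only [map_add, map_smul]
      rw [Submodule.orthogonalProjectionOnto_mem_subspace_eq_self,
        Submodule.orthogonalProjectionOnto_orthogonal_apply_eq_zero
          (Submodule.mem_span_singleton_self v), smul_zero, add_zero]
  have h3 := (measure_mono h2).trans h1
  rw [← finrank_orth hn hv] at h3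
  have h4 : 0 < (Measure.hausdorffMeasure (Module.finrank ℝ (ℝ ∙ v)ᗮ : ℝ) :
      Measure (ℝ ∙ v)ᗮ) (closedBall 0 1) :=
    measure_closedBall_pos _ _ one_pos
  exact absurd h3 (not_le.2 h4)

lemma sphMeasure_prob {n : ℕ} (hn : 2 ≤ n) : IsProbabilityMeasure (sphMeasure n) := by
  constructor
  rw [sphMeasure, Measure.smul_apply, Measure.restrict_apply_univ, smul_eq_mul]
  exact ENNReal.inv_mul_cancel (hausdorff_sphere_ne_zero hn) (hausdorff_sphere_ne_top hn)

lemma ae_sphere (n : ℕ) : ∀ᵐ ζ ∂(sphMeasure n), ‖ζ‖ = 1 := by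
  have h : ∀ᵐ ζ ∂((Measure.hausdorffMeasure ((n : ℝ) - 1) : Measure (Eucl n)).restrict
      (uSphere n)), ‖ζ‖ = 1 := by
    filter_upwards [ae_restrict_mem (isClosed_sphere (x := (0 : Eucl n)) (ε := 1)).measurableSet]
      with ζ hζ
    simpa [uSphere] using hζ
  exact Measure.ae_smul_measure h _

/-- The surface measure is invariant under linear isometries. -/
lemma sphMeasure_preserving {n : ℕ} (e : Eucl n ≃ₗᵢ[ℝ] Eucl n) :
    MeasurePreserving e (sphMeasure n) (sphMeasure n) := by
  have h := (e.toIsometryEquiv.measurePreserving_hausdorffMeasure ((n : ℝ) - 1)).restrict_preimage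
    (isClosed_sphere (x := (0 : Eucl n)) (ε := 1)).measurableSet
  have h2 : e.toIsometryEquiv ⁻¹' sphere 0 1 = uSphere n := by
    ext x
    simp [uSphere]
  rw [h2] at h
  exact h.smul_measure _

/-! ### Integration and differentiation on the sphere -/

lemma isCompact_uSphere (n : ℕ) : IsCompact (uSphere n) := isCompact_sphere _ _

lemma mem_uSphere {n : ℕ} {ζ : Eucl n} : ζ ∈ uSphere n ↔ ‖ζ‖ = 1 := by simp [uSphere]

lemma mem_uBall {n : ℕ} {z : Eucl n} : z ∈ uBall n ↔ ‖z‖ < 1 := by simp [uBall]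

lemma sph_restrict (n : ℕ) : (sphMeasure n).restrict (uSphere n) = sphMeasure n :=
  Measure.restrict_eq_self_of_ae_mem (by
    filter_upwards [ae_sphere n] with ζ hζ using mem_uSphere.2 hζ)

lemma integrable_sph {n : ℕ} (hn : 2 ≤ n) {E : Type*} [NormedAddCommGroup E] {f : Eucl n → E}
    (hf : ContinuousOn f (uSphere n)) : Integrable f (sphMeasure n) := by
  have := sphMeasure_prob hn
  rw [← sph_restrict n]
  exact hf.integrableOn_compact (isCompact_uSphere n)

lemma integral_sph_congr {n : ℕ} {E : Type*} [NormedAddCommGroup E] [NormedSpace ℝ E]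
    {f g : Eucl n → E}
    (h : ∀ ζ, ‖ζ‖ = 1 → f ζ = g ζ) : ∫ ζ, f ζ ∂(sphMeasure n) = ∫ ζ, g ζ ∂(sphMeasure n) :=
  integral_congr_ae (by filter_upwards [ae_sphere n] with ζ hζ using h ζ hζ)

/-- Differentiation under the integral sign over the sphere. -/
lemma hasDerivAt_sph {n : ℕ} (hn : 2 ≤ n) {F F' : ℝ → Eucl n → ℂ} {T : Set ℝ} {t₀ : ℝ}
    (hT : T ∈ 𝓝 t₀)
    (hd : ∀ t ∈ T, ∀ ζ, ‖ζ‖ = 1 → HasDerivAt (fun s => F s ζ) (F' t ζ) t)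
    (hF : ContinuousOn (Function.uncurry F) (T ×ˢ uSphere n))
    (hF' : ContinuousOn (Function.uncurry F') (T ×ˢ uSphere n)) :
    HasDerivAt (fun t => ∫ ζ, F t ζ ∂(sphMeasure n)) (∫ ζ, F' t₀ ζ ∂(sphMeasure n)) t₀ := by
  have := sphMeasure_prob hn
  obtain ⟨ε, hε, hεT⟩ := Metric.nhds_basis_closedBall.mem_iff.1 hT
  have hslice : ∀ {G : ℝ → Eucl n → ℂ}, ContinuousOn (Function.uncurry G) (T ×ˢ uSphere n) →
      ∀ t ∈ T, ContinuousOn (G t) (uSphere n) := by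
    intro G hG t ht
    exact hG.comp (f := fun ζ => (t, ζ)) (by fun_prop) (fun ζ hζ => ⟨ht, hζ⟩)
  obtain ⟨C, hC⟩ := ((isCompact_closedBall t₀ ε).prod
    (isCompact_uSphere n)).exists_bound_of_continuousOn (hF'.mono (prod_mono hεT le_rfl))
  refine (hasDerivAt_integral_of_dominated_loc_of_deriv_le (s := closedBall t₀ ε)
    (bound := fun _ => C) (F := F) (F' := F') (closedBall_mem_nhds _ hε) ?_ ?_ ?_ ?_ ?_ ?_).2
  · filter_upwards [hT] with t ht
    exact (integrable_sph hn (hslice hF t ht)).aestronglyMeasurable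
  · exact integrable_sph hn (hslice hF _ (mem_of_mem_nhds hT))
  · exact (integrable_sph hn (hslice hF' _ (mem_of_mem_nhds hT))).aestronglyMeasurable
  · filter_upwards [ae_sphere n] with ζ hζ t ht
    exact hC (t, ζ) ⟨ht, mem_uSphere.2 hζ⟩
  · exact integrable_const _
  · filter_upwards [ae_sphere n] with ζ hζ t ht
    exact hd t (hεT ht) ζ hζ

/-! ### Rotations and the spherical Green identity -/

/-- The infinitesimal generator `x ↦ xᵢ eⱼ - xⱼ eᵢ` of the rotations in the `(i,j)`-plane. -/
noncomputable def rotGen {n : ℕ} (i j : Fin n) : Eucl n →L[ℝ] Eucl n :=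
  (EuclideanSpace.proj i : Eucl n →L[ℝ] ℝ).smulRight (basisV n j) -
    (EuclideanSpace.proj j : Eucl n →L[ℝ] ℝ).smulRight (basisV n i)

lemma rotGen_apply {n : ℕ} (i j : Fin n) (x : Eucl n) :
    rotGen i j x = x i • basisV n j - x j • basisV n i := by
  simp [rotGen]

/-- The coordinate projection `x ↦ xᵢ eᵢ + xⱼ eⱼ` onto the `(i,j)`-plane (for `i ≠ j`). -/
noncomputable def planeProj {n : ℕ} (i j : Fin n) : Eucl n →L[ℝ] Eucl n :=
  (EuclideanSpace.proj i : Eucl n →L[ℝ] ℝ).smulRight (basisV n i) +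
    (EuclideanSpace.proj j : Eucl n →L[ℝ] ℝ).smulRight (basisV n j)

lemma planeProj_apply {n : ℕ} (i j : Fin n) (x : Eucl n) :
    planeProj i j x = x i • basisV n i + x j • basisV n j := by
  simp [planeProj]

lemma inner_basisV {n : ℕ} (i : Fin n) (x : Eucl n) : ⟪basisV n i, x⟫_ℝ = x i := by
  simp [basisV, EuclideanSpace.inner_single_left]

lemma inner_basisV' {n : ℕ} (i : Fin n) (x : Eucl n) : ⟪x, basisV n i⟫_ℝ = x i := by
  rw [real_inner_comm, inner_basisV]

lemma basisV_apply {n : ℕ} (i j : Fin n) : basisV n i j = if j = i then 1 else 0 := by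
  simp [basisV]

/-- The rotation by the angle `t` in the `(i,j)`-plane, as a continuous linear map. -/
noncomputable def rotMap {n : ℕ} (i j : Fin n) (t : ℝ) : Eucl n →L[ℝ] Eucl n :=
  ContinuousLinearMap.id ℝ _ + (Real.cos t - 1) • planeProj i j + Real.sin t • rotGen i j

lemma rotMap_apply {n : ℕ} (i j : Fin n) (t : ℝ) (x : Eucl n) :
    rotMap i j t x = x + (Real.cos t - 1) • planeProj i j x + Real.sin t • rotGen i j x := by
  simp [rotMap]

lemma norm_rotMap {n : ℕ} {i j : Fin n} (hij : i ≠ j) (t : ℝ) (x : Eucl n) :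
    ‖rotMap i j t x‖ = ‖x‖ := by
  have h : ‖rotMap i j t x‖ ^ 2 = ‖x‖ ^ 2 := by
    rw [← real_inner_self_eq_norm_sq, ← real_inner_self_eq_norm_sq, rotMap_apply,
      planeProj_apply, rotGen_apply]
    simp only [inner_add_left, inner_add_right, inner_sub_left, inner_sub_right,
      real_inner_smul_left, real_inner_smul_right, inner_basisV, inner_basisV', basisV_apply,
      if_neg hij, if_neg hij.symm, if_true]
    linear_combination (x i ^ 2 + x j ^ 2) * Real.sin_sq_add_cos_sq t
  exact (sq_eq_sq₀ (norm_nonneg _) (norm_nonneg _)).1 h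

/-- The rotation by the angle `t` in the `(i,j)`-plane, as a linear isometry. -/
noncomputable def rotIso {n : ℕ} {i j : Fin n} (hij : i ≠ j) (t : ℝ) : Eucl n ≃ₗᵢ[ℝ] Eucl n :=
  LinearIsometry.toLinearIsometryEquiv ⟨(rotMap i j t).toLinearMap, norm_rotMap hij t⟩ rfl

lemma rotIso_apply {n : ℕ} {i j : Fin n} (hij : i ≠ j) (t : ℝ) (x : Eucl n) :
    rotIso hij t x = rotMap i j t x := rfl

/-- A rotation-generating vector field has mean zero on the sphere: differentiate the constant
function `t ↦ ∫ w(R_t ζ) dσ(ζ)` at `t = 0`. -/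
lemma integral_rotGen {n : ℕ} (hn : 2 ≤ n) (i j : Fin n) {w : Eucl n → ℂ} {Ω : Set (Eucl n)}
    (hΩ : IsOpen Ω) (hS : uSphere n ⊆ Ω) (hw : ContDiffOn ℝ 1 w Ω) :
    ∫ ζ, fderiv ℝ w ζ (rotGen i j ζ) ∂(sphMeasure n) = 0 := by
  by_cases hij : i = j
  · subst hij
    simp [rotGen_apply]
  have hmem : ∀ t : ℝ, ∀ ζ : Eucl n, ‖ζ‖ = 1 → rotMap i j t ζ ∈ Ω := fun t ζ hζ =>
    hS (mem_uSphere.2 (by rw [norm_rotMap hij, hζ]))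
  have hcont : Continuous (fun p : ℝ × Eucl n => rotMap i j p.1 p.2) := by
    simp only [rotMap_apply]
    fun_prop
  have hmaps : MapsTo (fun p : ℝ × Eucl n => rotMap i j p.1 p.2) (univ ×ˢ uSphere n) Ω :=
    fun p hp => hmem _ _ (mem_uSphere.1 hp.2)
  have hd := hasDerivAt_sph hn (T := univ) (t₀ := 0) univ_mem
    (F := fun t ζ => w (rotMap i j t ζ))
    (F' := fun t ζ => fderiv ℝ w (rotMap i j t ζ)
      ((-Real.sin t) • planeProj i j ζ + Real.cos t • rotGen i j ζ)) ?_ ?_ ?_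
  · have hconst : (fun t => ∫ ζ, w (rotMap i j t ζ) ∂(sphMeasure n)) =
        fun _ => ∫ ζ, w ζ ∂(sphMeasure n) := by
      funext t
      exact (sphMeasure_preserving (rotIso hij t)).integral_comp
        (rotIso hij t).toHomeomorph.measurableEmbedding w
    rw [hconst] at hd
    have h0 := hd.unique (hasDerivAt_const (0 : ℝ) _)
    simpa [rotMap_apply] using h0
  · intro t _ ζ hζ
    have h1 : HasDerivAt (fun s => rotMap i j s ζ)
        ((-Real.sin t) • planeProj i j ζ + Real.cos t • rotGen i j ζ) t := by
      simp only [rotMap_apply]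
      have := (((Real.hasDerivAt_cos t).sub_const 1).smul_const (planeProj i j ζ)).const_add ζ
      exact this.add ((Real.hasDerivAt_sin t).smul_const (rotGen i j ζ))
    have h2 : HasFDerivAt w (fderiv ℝ w (rotMap i j t ζ)) (rotMap i j t ζ) :=
      ((hw.differentiableOn one_ne_zero).differentiableAt
        (hΩ.mem_nhds (hmem t ζ hζ))).hasFDerivAt
    exact h2.comp_hasDerivAt t h1
  · exact hw.continuousOn.comp hcont.continuousOn hmaps
  · refine ContinuousOn.clm_apply ?_ (by fun_prop)
    exact (hw.continuousOn_fderiv_of_isOpen hΩ le_rfl).comp hcont.continuousOn hmaps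

lemma contDiffOn_clm {n : ℕ} {U : Eucl n → ℂ} {Ω : Set (Eucl n)} (hΩ : IsOpen Ω)
    (hU : ContDiffOn ℝ 2 U Ω) (A : Eucl n →L[ℝ] Eucl n) :
    ContDiffOn ℝ 1 (fun x => fderiv ℝ U x (A x)) Ω :=
  (hU.fderiv_of_isOpen hΩ (by norm_num)).clm_apply A.contDiff.contDiffOn

lemma fderiv_clm {n : ℕ} {U : Eucl n → ℂ} {Ω : Set (Eucl n)} (hΩ : IsOpen Ω)
    (hU : ContDiffOn ℝ 2 U Ω) (A : Eucl n →L[ℝ] Eucl n) {x : Eucl n} (hx : x ∈ Ω) (v : Eucl n) :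
    fderiv ℝ (fun x => fderiv ℝ U x (A x)) x v =
      fderiv ℝ (fderiv ℝ U) x v (A x) + fderiv ℝ U x (A v) := by
  have h1 : HasFDerivAt (fderiv ℝ U) (fderiv ℝ (fderiv ℝ U) x) x :=
    (((hU.fderiv_of_isOpen hΩ (m := 1) (by norm_num)).differentiableOn
      one_ne_zero).differentiableAt (hΩ.mem_nhds hx)).hasFDerivAt
  rw [(h1.clm_apply A.hasFDerivAt).fderiv]
  simp [add_comm]

/-- Integration by parts along a rotation field. -/
lemma integral_rotGen_mul {n : ℕ} (hn : 2 ≤ n) (i j : Fin n) {U V : Eucl n → ℂ}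
    {Ω : Set (Eucl n)} (hΩ : IsOpen Ω) (hS : uSphere n ⊆ Ω) (hU : ContDiffOn ℝ 2 U Ω)
    (hV : ContDiffOn ℝ 2 V Ω) :
    ∫ ζ, fderiv ℝ (fun x => fderiv ℝ U x (rotGen i j x)) ζ (rotGen i j ζ) * V ζ ∂(sphMeasure n)
      = - ∫ ζ, fderiv ℝ U ζ (rotGen i j ζ) * fderiv ℝ V ζ (rotGen i j ζ) ∂(sphMeasure n) := by
  have hL := contDiffOn_clm hΩ hU (rotGen i j)
  have hV1 : ContDiffOn ℝ 1 V Ω := hV.of_le (by norm_num)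
  have h := integral_rotGen hn i j hΩ hS (hL.mul hV1)
  have c1 : ContinuousOn (fun ζ => fderiv ℝ (fun x => fderiv ℝ U x (rotGen i j x)) ζ
      (rotGen i j ζ) * V ζ) (uSphere n) :=
    (((hL.continuousOn_fderiv_of_isOpen hΩ le_rfl).clm_apply (by fun_prop)).mul
      hV.continuousOn).mono hS
  have c2 : ContinuousOn (fun ζ => fderiv ℝ U ζ (rotGen i j ζ) * fderiv ℝ V ζ (rotGen i j ζ))
      (uSphere n) :=
    (hL.continuousOn.mul (contDiffOn_clm hΩ hV (rotGen i j)).continuousOn).mono hS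
  rw [eq_neg_iff_add_eq_zero, ← integral_add (integrable_sph hn c1) (integrable_sph hn c2), ← h]
  refine integral_sph_congr fun ζ hζ => ?_
  have hm := hΩ.mem_nhds (hS (mem_uSphere.2 hζ))
  have d1 := (hL.differentiableOn one_ne_zero).differentiableAt hm
  have d2 := (hV1.differentiableOn one_ne_zero).differentiableAt hm
  rw [fderiv_fun_mul d1 d2]
  simp
  ring

/-- The spherical Laplacian at a point of the unit sphere, expressed through the derivatives of an
ambient function. -/
noncomputable def sphLap {n : ℕ} (U : Eucl n → ℂ) (ζ : Eucl n) : ℂ :=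
  lap U ζ - fderiv ℝ (fderiv ℝ U) ζ ζ ζ - ((n : ℂ) - 1) * fderiv ℝ U ζ ζ

lemma eucl_sum {n : ℕ} (x : Eucl n) : x = ∑ i, x i • basisV n i := by
  ext k
  simp [basisV_apply]

lemma lap_eq {n : ℕ} {F : Type*} [NormedAddCommGroup F] [NormedSpace ℝ F] (U : Eucl n → F)
    (x : Eucl n) :
    lap U x = ∑ i, fderiv ℝ (fderiv ℝ U) x (basisV n i) (basisV n i) := by
  simp [lap, iteratedFDeriv_two_apply]

/-- The spherical Laplacian is half of the sum of the squares of all the generators. -/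
lemma sum_rotGen_sq {n : ℕ} {U : Eucl n → ℂ} {Ω : Set (Eucl n)} (hΩ : IsOpen Ω)
    (hU : ContDiffOn ℝ 2 U Ω) {x : Eucl n} (hx : x ∈ Ω) (hx1 : ‖x‖ = 1) :
    ∑ i, ∑ j, fderiv ℝ (fun x => fderiv ℝ U x (rotGen i j x)) x (rotGen i j x)
      = 2 * sphLap U x := by
  set B := fderiv ℝ (fderiv ℝ U) x with hB
  set l := fderiv ℝ U x with hl
  have hsq : ∑ i, x i ^ 2 = 1 := by
    have := EuclideanSpace.norm_sq_eq x
    rw [hx1] at this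
    simpa using this.symm
  have hsqC : ∑ i, ((x i : ℝ) : ℂ) ^ 2 = 1 := by exact_mod_cast hsq
  have hl1 : l x = ∑ i, (x i : ℂ) * l (basisV n i) := by
    conv_lhs => rw [eucl_sum x]
    simp
  have hB1 : B x x = ∑ i, ∑ j, (x i : ℂ) * (x j : ℂ) * B (basisV n i) (basisV n j) := by
    conv_lhs => rw [eucl_sum x]
    simp only [map_sum, map_smul, sum_apply, smul_apply, Finset.smul_sum, Complex.real_smul]
    rw [Finset.sum_comm]
    exact Finset.sum_congr rfl fun i _ => Finset.sum_congr rfl fun j _ => by ring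
  have hterm : ∀ i j, fderiv ℝ (fun x => fderiv ℝ U x (rotGen i j x)) x (rotGen i j x) =
      (x i : ℂ) ^ 2 * B (basisV n j) (basisV n j) + (x j : ℂ) ^ 2 * B (basisV n i) (basisV n i)
      - (x i : ℂ) * (x j : ℂ) * B (basisV n i) (basisV n j)
      - (x j : ℂ) * (x i : ℂ) * B (basisV n j) (basisV n i)
      - (x i : ℂ) * l (basisV n i) - (x j : ℂ) * l (basisV n j)
      + (if i = j then 2 * ((x i : ℂ) * l (basisV n i)) else 0) := by
    intro i j
    rw [fderiv_clm hΩ hU _ hx]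
    simp only [rotGen_apply, map_sub, map_smul, sub_apply,
      smul_apply, basisV_apply,
      Complex.real_smul]
    rw [← hB, ← hl]
    by_cases h : i = j
    · subst h
      simp
      ring
    · rw [if_neg h, if_neg h, if_neg (Ne.symm h)]
      simp
      ring
  simp only [hterm]
  simp only [Finset.sum_add_distrib, Finset.sum_sub_distrib]
  rw [sphLap, lap_eq, ← hB, ← hl, hB1, hl1]
  have e1 : ∑ i, ∑ j, (x i : ℂ) ^ 2 * B (basisV n j) (basisV n j) =
      ∑ j, B (basisV n j) (basisV n j) := by
    rw [← Finset.sum_mul_sum, hsqC, one_mul]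
  have e2 : ∑ i, ∑ j, (x j : ℂ) ^ 2 * B (basisV n i) (basisV n i) =
      ∑ j, B (basisV n j) (basisV n j) := by
    rw [Finset.sum_comm, e1]
  have e3 : ∑ i, ∑ j, (x j : ℂ) * (x i : ℂ) * B (basisV n j) (basisV n i) =
      ∑ i, ∑ j, (x i : ℂ) * (x j : ℂ) * B (basisV n i) (basisV n j) := by
    rw [Finset.sum_comm]
  rw [e1, e2, e3]
  simp only [Finset.sum_ite_eq, Finset.mem_univ, if_true, Finset.sum_const, Finset.card_univ,
    Fintype.card_fin, nsmul_eq_mul]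
  rw [← Finset.mul_sum, ← Finset.mul_sum]
  ring

/-- The spherical Laplacian is symmetric with respect to the surface measure. -/
lemma sphLap_symm {n : ℕ} (hn : 2 ≤ n) {U V : Eucl n → ℂ}
    {Ω : Set (Eucl n)} (hΩ : IsOpen Ω) (hS : uSphere n ⊆ Ω) (hU : ContDiffOn ℝ 2 U Ω)
    (hV : ContDiffOn ℝ 2 V Ω) :
    ∫ ζ, sphLap U ζ * V ζ ∂(sphMeasure n) = ∫ ζ, U ζ * sphLap V ζ ∂(sphMeasure n) := by
  have key : ∀ {U V : Eucl n → ℂ}, ContDiffOn ℝ 2 U Ω → ContDiffOn ℝ 2 V Ω →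
      2 * ∫ ζ, sphLap U ζ * V ζ ∂(sphMeasure n) = ∑ i, ∑ j,
        - ∫ ζ, fderiv ℝ U ζ (rotGen i j ζ) * fderiv ℝ V ζ (rotGen i j ζ) ∂(sphMeasure n) := by
    intro U V hU hV
    have c1 : ∀ i j, Integrable (fun ζ => fderiv ℝ (fun x => fderiv ℝ U x (rotGen i j x)) ζ
        (rotGen i j ζ) * V ζ) (sphMeasure n) := fun i j => integrable_sph hn
      ((((contDiffOn_clm hΩ hU (rotGen i j)).continuousOn_fderiv_of_isOpen hΩ
        le_rfl).clm_apply (by fun_prop)).mul hV.continuousOn |>.mono hS)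
    simp_rw [← integral_rotGen_mul hn _ _ hΩ hS hU hV]
    rw [← integral_const_mul]
    simp_rw [← integral_finsetSum _ (fun j _ => c1 _ j)]
    rw [← integral_finsetSum _ (fun i _ => integrable_finsetSum _ (fun j _ => c1 i j))]
    refine integral_sph_congr fun ζ hζ => ?_
    rw [← mul_assoc, ← sum_rotGen_sq hΩ hU (hS (mem_uSphere.2 hζ)) hζ]
    simp [Finset.sum_mul]
  have h1 := key hU hV
  have h2 := key hV hU
  have h3 : 2 * ∫ ζ, sphLap U ζ * V ζ ∂(sphMeasure n) =
      2 * ∫ ζ, U ζ * sphLap V ζ ∂(sphMeasure n) := by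
    rw [h1]
    simp_rw [mul_comm (U _)]
    rw [h2]
    simp_rw [mul_comm (fderiv ℝ V _ _)]
  exact mul_left_cancel₀ two_ne_zero h3

/-! ### Pairings of dilated harmonic functions -/

lemma fderiv_dil {n : ℕ} (U : Eucl n → ℂ) (r : ℝ) (z v : Eucl n) :
    fderiv ℝ (fun z => U (r • z)) z v = r * fderiv ℝ U (r • z) v := by
  rw [fderiv_comp_smul]
  simp

lemma fderiv_fderiv_dil {n : ℕ} (U : Eucl n → ℂ) (r : ℝ) (z v w : Eucl n) :
    fderiv ℝ (fderiv ℝ (fun z => U (r • z))) z v w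
      = (r : ℂ) ^ 2 * fderiv ℝ (fderiv ℝ U) (r • z) v w := by
  have h : fderiv ℝ (fun z => U (r • z)) = fun z => r • fderiv ℝ U (r • z) := by
    funext z
    rw [fderiv_comp_smul]
  rw [h]
  have h2 := congrFun (fderiv_const_smul_field (𝕜 := ℝ) (f := fun z => fderiv ℝ U (r • z)) r) z
  have h3 : fderiv ℝ (fun z => fderiv ℝ U (r • z)) z = r • fderiv ℝ (fderiv ℝ U) (r • z) :=
    fderiv_comp_smul ..
  rw [Pi.smul_apply, h3] at h2
  have h4 : fderiv ℝ (fun z => r • fderiv ℝ U (r • z)) z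
      = r • r • fderiv ℝ (fderiv ℝ U) (r • z) := h2
  rw [h4]
  simp
  ring

lemma smul_mem_ball_iff {n : ℕ} {r R : ℝ} (hr : 0 < r) (z : Eucl n) :
    r • z ∈ ball (0 : Eucl n) R ↔ z ∈ ball (0 : Eucl n) (R / r) := by
  rw [mem_ball_zero_iff, mem_ball_zero_iff, norm_smul, Real.norm_of_nonneg hr.le,
    lt_div_iff₀ hr, mul_comm]

lemma contDiffOn_dil {n : ℕ} {U : Eucl n → ℂ} {R r : ℝ} (hr : 0 < r)
    (hU : ContDiffOn ℝ 2 U (ball 0 R)) :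
    ContDiffOn ℝ 2 (fun z => U (r • z)) (ball 0 (R / r)) :=
  hU.comp (f := fun z : Eucl n => r • z) (by fun_prop)
    (fun z hz => (smul_mem_ball_iff hr z).2 hz)

lemma lap_dil {n : ℕ} (U : Eucl n → ℂ) (r : ℝ) (z : Eucl n) :
    lap (fun z => U (r • z)) z = (r : ℂ) ^ 2 * lap U (r • z) := by
  rw [lap_eq, lap_eq, Finset.mul_sum]
  simp only [fderiv_fderiv_dil]

lemma harmOn_dil {n : ℕ} {U : Eucl n → ℂ} {R r : ℝ} (hr : 0 < r)
    (hU : HarmOn U (ball 0 R)) : HarmOn (fun z => U (r • z)) (ball 0 (R / r)) :=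
  ⟨contDiffOn_dil hr hU.1, fun z hz => by
    rw [lap_dil, hU.2 _ ((smul_mem_ball_iff hr z).2 hz), mul_zero]⟩

lemma uSphere_subset_ball {n : ℕ} {R : ℝ} (hR : 1 < R) : uSphere n ⊆ ball 0 R := fun z hz => by
  rw [mem_ball_zero_iff, mem_uSphere.1 hz]
  exact hR

lemma smul_mem_ball_of {n : ℕ} {R t : ℝ} (ht : t ∈ Ioo (-R) R) {ζ : Eucl n} (hζ : ‖ζ‖ = 1) :
    t • ζ ∈ ball (0 : Eucl n) R := by
  rw [mem_ball_zero_iff, norm_smul, hζ, mul_one, Real.norm_eq_abs, abs_lt]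
  exact ht

lemma hasDerivAt_ray {n : ℕ} {E : Type*} [NormedAddCommGroup E] [NormedSpace ℝ E]
    {G : Eucl n → E} {s : Set (Eucl n)} (hs : IsOpen s)
    (hG : ContDiffOn ℝ 1 G s) {t : ℝ} {ζ : Eucl n} (h : t • ζ ∈ s) :
    HasDerivAt (fun τ : ℝ => G (τ • ζ)) (fderiv ℝ G (t • ζ) ζ) t := by
  have h1 : HasDerivAt (fun τ : ℝ => τ • ζ) ζ t := by
    simpa using (hasDerivAt_id t).smul_const ζ
  exact ((hG.differentiableOn one_ne_zero).differentiableAt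
    (hs.mem_nhds h)).hasFDerivAt.comp_hasDerivAt t h1

/-- The two boundary terms in Green's formula for functions harmonic beyond the closed unit ball
agree. With `H(τ)` their difference on the sphere of radius `τ`, the symmetry of the spherical
Laplacian gives `(τ^(n-1) H)' = 0`, and `τ^(n-1) H → 0` as `τ → 0`. -/
lemma wronskian {n : ℕ} (hn : 2 ≤ n) {U V : Eucl n → ℂ} {R : ℝ} (hR : 1 < R)
    (hU : HarmOn U (ball 0 R)) (hV : HarmOn V (ball 0 R)) :
    ∫ ζ, (fderiv ℝ U ζ ζ * V ζ - U ζ * fderiv ℝ V ζ ζ) ∂(sphMeasure n) = 0 := by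
  set H : ℝ → ℂ := fun τ => ∫ ζ, (fderiv ℝ U (τ • ζ) ζ * V (τ • ζ)
    - U (τ • ζ) * fderiv ℝ V (τ • ζ) ζ) ∂(sphMeasure n) with hH
  set H' : ℝ → ℂ := fun τ => ∫ ζ, (fderiv ℝ (fderiv ℝ U) (τ • ζ) ζ ζ * V (τ • ζ)
    - U (τ • ζ) * fderiv ℝ (fderiv ℝ V) (τ • ζ) ζ ζ) ∂(sphMeasure n) with hH'
  have hb : IsOpen (ball (0 : Eucl n) R) := isOpen_ball
  have hU1 : ContDiffOn ℝ 1 U (ball 0 R) := hU.1.of_le (by norm_num)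
  have hV1 : ContDiffOn ℝ 1 V (ball 0 R) := hV.1.of_le (by norm_num)
  have hDU : ContDiffOn ℝ 1 (fderiv ℝ U) (ball 0 R) := hU.1.fderiv_of_isOpen hb (by norm_num)
  have hDV : ContDiffOn ℝ 1 (fderiv ℝ V) (ball 0 R) := hV.1.fderiv_of_isOpen hb (by norm_num)
  have hmaps : MapsTo (fun p : ℝ × Eucl n => p.1 • p.2) (Ioo (-R) R ×ˢ uSphere n) (ball 0 R) :=
    fun p hp => smul_mem_ball_of hp.1 (mem_uSphere.1 hp.2)
  have hcomp : ∀ {E : Type} [TopologicalSpace E] {G : Eucl n → E},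
      ContinuousOn G (ball 0 R) →
      ContinuousOn (fun p : ℝ × Eucl n => G (p.1 • p.2)) (Ioo (-R) R ×ˢ uSphere n) :=
    fun hG => hG.comp (by fun_prop) hmaps
  have cU := hcomp hU.1.continuousOn
  have cV := hcomp hV.1.continuousOn
  have cDU := hcomp hDU.continuousOn
  have cDV := hcomp hDV.continuousOn
  have cDDU := hcomp (hDU.continuousOn_fderiv_of_isOpen hb le_rfl)
  have cDDV := hcomp (hDV.continuousOn_fderiv_of_isOpen hb le_rfl)
  have c2 : ContinuousOn (fun p : ℝ × Eucl n => p.2) (Ioo (-R) R ×ˢ uSphere n) := by fun_prop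
  have hder : ∀ τ ∈ Ioo (-R) R, HasDerivAt H (H' τ) τ := by
    intro τ hτ
    refine hasDerivAt_sph hn (T := Ioo (-R) R)
      (F := fun τ ζ => fderiv ℝ U (τ • ζ) ζ * V (τ • ζ) - U (τ • ζ) * fderiv ℝ V (τ • ζ) ζ)
      (F' := fun τ ζ => fderiv ℝ (fderiv ℝ U) (τ • ζ) ζ ζ * V (τ • ζ)
        - U (τ • ζ) * fderiv ℝ (fderiv ℝ V) (τ • ζ) ζ ζ) (isOpen_Ioo.mem_nhds hτ) ?_ ?_ ?_
    · intro t ht ζ hζ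
      have hm := smul_mem_ball_of ht hζ
      have a1 := hasDerivAt_ray hb hU1 hm
      have a2 := hasDerivAt_ray hb hV1 hm
      have a3 := (hasDerivAt_ray hb hDU hm).clm_apply (hasDerivAt_const t ζ)
      have a4 := (hasDerivAt_ray hb hDV hm).clm_apply (hasDerivAt_const t ζ)
      convert! (a3.mul a2).sub (a1.mul a4) using 1
      simp
      ring
    · exact ((cDU.clm_apply c2).mul cV).sub (cU.mul (cDV.clm_apply c2))
    · exact (((cDDU.clm_apply c2).clm_apply c2).mul cV).sub
        (cU.mul ((cDDV.clm_apply c2).clm_apply c2))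
  -- the differential equation `τ² H' + (n-1) τ H = 0`
  have hode : ∀ τ ∈ Ioo 0 R, (τ : ℂ) ^ 2 * H' τ + ((n : ℂ) - 1) * (τ * H τ) = 0 := by
    intro τ hτ
    have hτ' : τ ∈ Ioo (-R) R := ⟨by linarith [hτ.1], hτ.2⟩
    have hS : uSphere n ⊆ ball 0 (R / τ) :=
      uSphere_subset_ball ((one_lt_div hτ.1).2 hτ.2)
    have hUτ := harmOn_dil hτ.1 hU
    have hVτ := harmOn_dil hτ.1 hV
    have hsym := sphLap_symm hn isOpen_ball hS hUτ.1 hVτ.1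
    have hslice : ∀ {E : Type} [TopologicalSpace E] {G : Eucl n → E},
        ContinuousOn G (ball 0 R) → ContinuousOn (fun ζ => G (τ • ζ)) (uSphere n) :=
      fun hG => hG.comp (by fun_prop) (fun ζ hζ => smul_mem_ball_of hτ' (mem_uSphere.1 hζ))
    have dU := hslice hU.1.continuousOn
    have dV := hslice hV.1.continuousOn
    have dDU := hslice hDU.continuousOn
    have dDV := hslice hDV.continuousOn
    have dDDU := hslice (hDU.continuousOn_fderiv_of_isOpen hb le_rfl)
    have dDDV := hslice (hDV.continuousOn_fderiv_of_isOpen hb le_rfl)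
    have hid : ContinuousOn (fun ζ : Eucl n => ζ) (uSphere n) := continuousOn_id
    have eU : ∀ ζ : Eucl n, ‖ζ‖ = 1 → sphLap (fun z => U (τ • z)) ζ =
        -((τ : ℂ) ^ 2 * fderiv ℝ (fderiv ℝ U) (τ • ζ) ζ ζ)
          - ((n : ℂ) - 1) * (τ * fderiv ℝ U (τ • ζ) ζ) := by
      intro ζ hζ
      rw [sphLap, hUτ.2 ζ (hS (mem_uSphere.2 hζ)), fderiv_fderiv_dil, fderiv_dil]
      ring
    have eV : ∀ ζ : Eucl n, ‖ζ‖ = 1 → sphLap (fun z => V (τ • z)) ζ =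
        -((τ : ℂ) ^ 2 * fderiv ℝ (fderiv ℝ V) (τ • ζ) ζ ζ)
          - ((n : ℂ) - 1) * (τ * fderiv ℝ V (τ • ζ) ζ) := by
      intro ζ hζ
      rw [sphLap, hVτ.2 ζ (hS (mem_uSphere.2 hζ)), fderiv_fderiv_dil, fderiv_dil]
      ring
    rw [integral_sph_congr (g := fun ζ => (-((τ : ℂ) ^ 2 *
          fderiv ℝ (fderiv ℝ U) (τ • ζ) ζ ζ) - ((n : ℂ) - 1) * (τ * fderiv ℝ U (τ • ζ) ζ)) *
          V (τ • ζ)) fun ζ hζ => by rw [eU ζ hζ],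
      integral_sph_congr (f := fun ζ => U (τ • ζ) * sphLap (fun z => V (τ • z)) ζ)
        (g := fun ζ => U (τ • ζ) * (-((τ : ℂ) ^ 2 *
          fderiv ℝ (fderiv ℝ V) (τ • ζ) ζ ζ) - ((n : ℂ) - 1) * (τ * fderiv ℝ V (τ • ζ) ζ)))
        fun ζ hζ => by rw [eV ζ hζ], ← sub_eq_zero, ← integral_sub] at hsym
    · rw [hH, hH']
      simp only
      rw [← integral_const_mul, ← integral_const_mul, ← integral_const_mul, ← integral_add]
      · rw [← neg_eq_zero, ← integral_neg, ← hsym]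
        refine integral_congr_ae (Eventually.of_forall fun ζ => ?_)
        simp only
        ring
      · refine integrable_sph hn (continuousOn_const.mul ?_)
        exact (((dDDU.clm_apply hid).clm_apply hid).mul dV).sub
          (dU.mul ((dDDV.clm_apply hid).clm_apply hid))
      · refine integrable_sph hn (continuousOn_const.mul (continuousOn_const.mul ?_))
        exact ((dDU.clm_apply hid).mul dV).sub (dU.mul (dDV.clm_apply hid))
    · refine integrable_sph hn (ContinuousOn.mul ?_ dV)
      exact (continuousOn_const.mul ((dDDU.clm_apply hid).clm_apply hid)).neg.sub
        (continuousOn_const.mul (continuousOn_const.mul (dDU.clm_apply hid)))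
    · refine integrable_sph hn (ContinuousOn.mul dU ?_)
      exact (continuousOn_const.mul ((dDDV.clm_apply hid).clm_apply hid)).neg.sub
        (continuousOn_const.mul (continuousOn_const.mul (dDV.clm_apply hid)))
  obtain ⟨m, rfl⟩ : ∃ m, n = m + 2 := ⟨n - 2, by omega⟩
  have hfd : ∀ τ ∈ Ioo (-R) R, HasDerivAt (fun τ : ℝ => ((τ : ℂ)) ^ (m + 1) * H τ)
      (((m + 1 : ℕ) * (τ : ℂ) ^ m * 1) * H τ + (τ : ℂ) ^ (m + 1) * H' τ) τ := by
    intro τ hτ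
    exact ((Complex.ofRealCLM.hasDerivAt (x := τ)).pow (m + 1)).mul (hder τ hτ)
  have hconst : ∀ τ ∈ Ioo 0 R, (τ : ℂ) ^ (m + 1) * H τ = H 1 := by
    intro τ hτ
    have hsub : ∀ τ ∈ Ioo 0 R, τ ∈ Ioo (-R) R := fun τ hτ => ⟨by linarith [hτ.1], hτ.2⟩
    have := isOpen_Ioo.is_const_of_deriv_eq_zero isPreconnected_Ioo
      (f := fun τ : ℝ => ((τ : ℂ)) ^ (m + 1) * H τ) (s := Ioo 0 R)
      (fun τ hτ => (hfd τ (hsub τ hτ)).differentiableAt.differentiableWithinAt)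
      (fun τ hτ => by
        rw [(hfd τ (hsub τ hτ)).deriv]
        have h0 : (τ : ℂ) ≠ 0 := by exact_mod_cast hτ.1.ne'
        refine mul_left_cancel₀ h0 ?_
        have h := hode τ hτ
        push_cast at h ⊢
        simp only [Pi.zero_apply]
        linear_combination (τ : ℂ) ^ m * h) hτ (y := 1) ⟨one_pos, hR⟩
    simpa using this
  have hlim : Tendsto (fun τ : ℝ => ((τ : ℂ)) ^ (m + 1) * H τ) (𝓝[>] 0) (𝓝 0) := by
    have := (hfd 0 ⟨by linarith, by linarith⟩).continuousAt.tendsto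
    simp only [Complex.ofReal_zero, zero_pow (Nat.succ_ne_zero m), zero_mul] at this
    exact this.mono_left nhdsWithin_le_nhds
  have hlim2 : Tendsto (fun τ : ℝ => ((τ : ℂ)) ^ (m + 1) * H τ) (𝓝[>] 0) (𝓝 (H 1)) := by
    refine tendsto_const_nhds.congr' ?_
    filter_upwards [Ioo_mem_nhdsGT (show (0 : ℝ) < R by linarith)] with τ hτ
    exact (hconst τ hτ).symm
  have := tendsto_nhds_unique hlim2 hlim
  simpa [hH] using this

/-- For harmonic `u, v` on the unit ball the pairing `∫ u(rζ) v(sζ) dσ(ζ)` depends only on the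
product `rs`. -/
lemma pairing_dil {n : ℕ} (hn : 2 ≤ n) {u v : Eucl n → ℂ} (hu : HarmOn u (uBall n))
    (hv : HarmOn v (uBall n)) {c r r' : ℝ} (hc : 0 < c) (hr : r ∈ Ioo c 1) (hr' : r' ∈ Ioo c 1) :
    ∫ ζ, u (r • ζ) * v ((c / r) • ζ) ∂(sphMeasure n) =
      ∫ ζ, u (r' • ζ) * v ((c / r') • ζ) ∂(sphMeasure n) := by
  have hb : IsOpen (ball (0 : Eucl n) 1) := isOpen_ball
  have hu1 : ContDiffOn ℝ 1 u (ball 0 1) := hu.1.of_le (by norm_num)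
  have hv1 : ContDiffOn ℝ 1 v (ball 0 1) := hv.1.of_le (by norm_num)
  have hpos : ∀ t ∈ Ioo c 1, 0 < t := fun t ht => hc.trans ht.1
  have hq : ∀ t ∈ Ioo c 1, c / t ∈ Ioo 0 1 := fun t ht =>
    ⟨div_pos hc (hpos t ht), (div_lt_one (hpos t ht)).2 ht.1⟩
  have hm1 : ∀ t ∈ Ioo c 1, ∀ ζ : Eucl n, ‖ζ‖ = 1 → t • ζ ∈ ball (0 : Eucl n) 1 :=
    fun t ht ζ hζ => smul_mem_ball_of ⟨by linarith [hpos t ht], ht.2⟩ hζ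
  have hm2 : ∀ t ∈ Ioo c 1, ∀ ζ : Eucl n, ‖ζ‖ = 1 → (c / t) • ζ ∈ ball (0 : Eucl n) 1 :=
    fun t ht ζ hζ => smul_mem_ball_of ⟨by linarith [(hq t ht).1], (hq t ht).2⟩ hζ
  have hcdiv : ContinuousOn (fun p : ℝ × Eucl n => c / p.1) (Ioo c 1 ×ˢ uSphere n) :=
    continuousOn_const.div continuousOn_fst fun p hp => (hpos _ hp.1).ne'
  have hcdiv2 : ContinuousOn (fun p : ℝ × Eucl n => (-c) / p.1 ^ 2) (Ioo c 1 ×ˢ uSphere n) :=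
    continuousOn_const.div (continuousOn_fst.pow 2) fun p hp => pow_ne_zero 2 (hpos _ hp.1).ne'
  have k1 : ∀ {E : Type} [TopologicalSpace E] {G : Eucl n → E}, ContinuousOn G (ball 0 1) →
      ContinuousOn (fun p : ℝ × Eucl n => G (p.1 • p.2)) (Ioo c 1 ×ˢ uSphere n) :=
    fun hG => hG.comp (by fun_prop) (fun p hp => hm1 _ hp.1 _ (mem_uSphere.1 hp.2))
  have k2 : ∀ {E : Type} [TopologicalSpace E] {G : Eucl n → E}, ContinuousOn G (ball 0 1) →
      ContinuousOn (fun p : ℝ × Eucl n => G ((c / p.1) • p.2)) (Ioo c 1 ×ˢ uSphere n) :=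
    fun hG => hG.comp (hcdiv.smul continuousOn_snd)
      (fun p hp => hm2 _ hp.1 _ (mem_uSphere.1 hp.2))
  have hder : ∀ t ∈ Ioo c 1, HasDerivAt
      (fun t : ℝ => ∫ ζ, u (t • ζ) * v ((c / t) • ζ) ∂(sphMeasure n)) 0 t := by
    intro t ht
    have hd := hasDerivAt_sph hn (T := Ioo c 1) (t₀ := t)
      (F := fun t ζ => u (t • ζ) * v ((c / t) • ζ))
      (F' := fun t ζ => fderiv ℝ u (t • ζ) ζ * v ((c / t) • ζ) +
        u (t • ζ) * (((-c) / t ^ 2) • fderiv ℝ v ((c / t) • ζ) ζ))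
      (isOpen_Ioo.mem_nhds ht) ?_ ?_ ?_
    · convert! hd using 1
      have hmax : 0 < max t (c / t) := lt_max_of_lt_left (hpos t ht)
      have hR : 1 < 1 / max t (c / t) :=
        (one_lt_div hmax).2 (max_lt ht.2 (hq t ht).2)
      have hU := harmOn_dil (hpos t ht) hu
      have hV := harmOn_dil (hq t ht).1 hv
      have s1 : ball (0 : Eucl n) (1 / max t (c / t)) ⊆ ball 0 (1 / t) :=
        ball_subset_ball (one_div_le_one_div_of_le (hpos t ht) (le_max_left _ _))
      have s2 : ball (0 : Eucl n) (1 / max t (c / t)) ⊆ ball 0 (1 / (c / t)) :=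
        ball_subset_ball (one_div_le_one_div_of_le (hq t ht).1 (le_max_right _ _))
      have hw := wronskian hn hR ⟨hU.1.mono s1, fun x hx => hU.2 x (s1 hx)⟩
        ⟨hV.1.mono s2, fun x hx => hV.2 x (s2 hx)⟩
      have ht0 : (t : ℂ) ≠ 0 := by exact_mod_cast (hpos t ht).ne'
      refine (mul_left_cancel₀ ht0 ?_).symm
      rw [mul_zero, ← integral_const_mul, ← hw]
      refine integral_congr_ae (Eventually.of_forall fun ζ => ?_)
      simp only [fderiv_dil, Complex.real_smul]
      push_cast
      field_simp
      ring
    · intro t ht ζ hζ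
      have a1 := hasDerivAt_ray hb hu1 (hm1 t ht ζ hζ)
      have a2 := hasDerivAt_ray hb hv1 (hm2 t ht ζ hζ)
      have a3 : HasDerivAt (fun t : ℝ => c / t) ((-c) / t ^ 2) t := by
        convert! (hasDerivAt_const t c).div (hasDerivAt_id' t) (hpos t ht).ne' using 1
        simp
      exact a1.mul (a2.scomp t a3)
    · exact (k1 hu.1.continuousOn).mul (k2 hv.1.continuousOn)
    · exact (((k1 (hu1.continuousOn_fderiv_of_isOpen hb le_rfl)).clm_apply continuousOn_snd).mul
        (k2 hv.1.continuousOn)).add ((k1 hu.1.continuousOn).mul (hcdiv2.smul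
          ((k2 (hv1.continuousOn_fderiv_of_isOpen hb le_rfl)).clm_apply continuousOn_snd)))
  exact isOpen_Ioo.is_const_of_deriv_eq_zero isPreconnected_Ioo
    (f := fun t : ℝ => ∫ ζ, u (t • ζ) * v ((c / t) • ζ) ∂(sphMeasure n))
    (fun t ht => (hder t ht).differentiableAt.differentiableWithinAt)
    (fun t ht => (hder t ht).deriv) hr hr'

lemma harmOn_const {n : ℕ} (c : ℂ) (s : Set (Eucl n)) : HarmOn (fun _ => c) s := by
  refine ⟨contDiffOn_const, fun x _ => ?_⟩
  rw [lap_eq]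
  simp

/-- The mean value property. -/
lemma mean_value {n : ℕ} (hn : 2 ≤ n) {u : Eucl n → ℂ} (hu : HarmOn u (uBall n)) {r : ℝ}
    (hr : r ∈ Ioo (0 : ℝ) 1) : ∫ ζ, u (r • ζ) ∂(sphMeasure n) = u 0 := by
  have := sphMeasure_prob hn
  have hb : IsOpen (ball (0 : Eucl n) 1) := isOpen_ball
  have hu1 : ContDiffOn ℝ 1 u (ball 0 1) := hu.1.of_le (by norm_num)
  have hmaps : MapsTo (fun p : ℝ × Eucl n => p.1 • p.2) (Ioo (-1) 1 ×ˢ uSphere n) (ball 0 1) :=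
    fun p hp => smul_mem_ball_of hp.1 (mem_uSphere.1 hp.2)
  have hd := hasDerivAt_sph hn (T := Ioo (-1) 1) (t₀ := 0) (F := fun t ζ => u (t • ζ))
    (F' := fun t ζ => fderiv ℝ u (t • ζ) ζ) (isOpen_Ioo.mem_nhds ⟨by norm_num, by norm_num⟩)
    (fun t ht ζ hζ => hasDerivAt_ray hb hu1 (smul_mem_ball_of ht hζ))
    (hu.1.continuousOn.comp (by fun_prop) hmaps)
    (((hu1.continuousOn_fderiv_of_isOpen hb le_rfl).comp (by fun_prop) hmaps).clm_apply
      continuousOn_snd)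
  have hlim := hd.continuousAt.tendsto.mono_left (nhdsWithin_le_nhds (s := Ioi 0))
  simp only [zero_smul, integral_const, probReal_univ, one_smul] at hlim
  refine tendsto_nhds_unique (tendsto_const_nhds.congr' ?_) hlim
  filter_upwards [Ioo_mem_nhdsGT (show (0 : ℝ) < 1 by norm_num)] with t ht
  have := pairing_dil hn hu (harmOn_const 1 (uBall n)) (mul_pos hr.1 ht.1) (r := r) (r' := t)
    ⟨by nlinarith [hr.1, ht.2], hr.2⟩ ⟨by nlinarith [hr.2, ht.1], ht.2⟩
  simpa using this

/-! ### The Kelvin-type kernels -/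

/-- The function `z ↦ (α|z - p|² + β·(z - p)) / |z - p|ⁿ`, a linear combination of `|z - p|^(2-n)`
and of the dipole kernels `(z - p)ᵢ / |z - p|ⁿ`. -/
noncomputable def polKer {n : ℕ} (α : ℝ) (β p : Eucl n) (z : Eucl n) : ℝ :=
  (α * ‖z - p‖ ^ 2 + ⟪β, z - p⟫_ℝ) * (‖z - p‖ ^ 2) ^ (-((n : ℝ) / 2))

lemma contDiffAt_polKer {n : ℕ} (α : ℝ) (β p : Eucl n) {z : Eucl n} (hz : z ≠ p) :
    ContDiffAt ℝ 2 (fun z => ((polKer α β p z : ℝ) : ℂ)) z := by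
  have h0 : ‖z - p‖ ^ 2 ≠ 0 := by
    have := norm_ne_zero_iff.2 (sub_ne_zero.2 hz)
    positivity
  have h1 : ContDiffAt ℝ 2 (fun z : Eucl n => ‖z - p‖ ^ 2) z :=
    (contDiffAt_id.sub contDiffAt_const).norm_sq ℝ
  have h2 : ContDiffAt ℝ 2 (fun z : Eucl n => ⟪β, z - p⟫_ℝ) z :=
    contDiffAt_const.inner ℝ (contDiffAt_id.sub contDiffAt_const)
  exact Complex.ofRealCLM.contDiff.contDiffAt.comp z
    (((contDiffAt_const.mul h1).add h2).mul (h1.rpow_const_of_ne h0))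

/-- The second derivative of `f` in the direction `e` is the second derivative of its restriction
to the line through `x` in the direction `e`. -/
lemma fderiv_fderiv_of_line {n : ℕ} {f : Eucl n → ℂ} {x e : Eucl n} (hf : ContDiffAt ℝ 2 f x)
    {γ' : ℝ → ℂ} {γ'' : ℂ} (h1 : ∀ᶠ t in 𝓝 (0 : ℝ), HasDerivAt (fun t : ℝ => f (x + t • e)) (γ' t) t)
    (h2 : HasDerivAt γ' γ'' 0) : fderiv ℝ (fderiv ℝ f) x e e = γ'' := by
  have hl : ∀ t : ℝ, HasDerivAt (fun t : ℝ => x + t • e) e t := fun t => by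
    simpa using ((hasDerivAt_id' t).smul_const e).const_add x
  have hc : Tendsto (fun t : ℝ => x + t • e) (𝓝 0) (𝓝 x) := by
    simpa using (hl 0).continuousAt.tendsto
  have hdf : ∀ᶠ t in 𝓝 (0 : ℝ), DifferentiableAt ℝ f (x + t • e) :=
    hc.eventually ((hf.eventually (by simp)).mono fun z hz => hz.differentiableAt (by simp))
  have heq : (fun t : ℝ => fderiv ℝ f (x + t • e) e) =ᶠ[𝓝 0] γ' := by
    filter_upwards [h1, hdf] with t ht hd
    exact (hd.hasFDerivAt.comp_hasDerivAt t (hl t)).unique ht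
  have hD : HasFDerivAt (fderiv ℝ f) (fderiv ℝ (fderiv ℝ f) x) (x + (0 : ℝ) • e) := by
    rw [zero_smul, add_zero]
    exact ((hf.fderiv_right (m := 1) (by norm_num)).differentiableAt (by simp)).hasFDerivAt
  have hD1 : HasDerivAt (fun t : ℝ => fderiv ℝ f (x + t • e)) (fderiv ℝ (fderiv ℝ f) x e) 0 :=
    hD.comp_hasDerivAt (0 : ℝ) (hl 0)
  have hD2 : HasDerivAt (fun t : ℝ => fderiv ℝ f (x + t • e) e)
      (fderiv ℝ (fderiv ℝ f) x e e + fderiv ℝ f (x + (0 : ℝ) • e) 0) 0 :=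
    hD1.clm_apply (hasDerivAt_const (0 : ℝ) e)
  have h3 : HasDerivAt (fun t : ℝ => fderiv ℝ f (x + t • e) e) γ'' 0 :=
    h2.congr_of_eventuallyEq heq
  have := hD2.unique h3
  rwa [map_zero, add_zero] at this

/-- `polKer α β p` is harmonic off its pole `p`. -/
lemma lap_polKer {n : ℕ} (α : ℝ) (β p : Eucl n) {z : Eucl n} (hz : z ≠ p) :
    lap (fun z => ((polKer α β p z : ℝ) : ℂ)) z = 0 := by
  set m : ℝ := -((n : ℝ) / 2) with hm
  set w := z - p with hw
  have hw0 : w ≠ 0 := sub_ne_zero.2 hz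
  set S := ‖w‖ ^ 2 with hS
  have hS0 : 0 < S := by have := norm_pos_iff.2 hw0; positivity
  set b := ⟪β, w⟫_ℝ with hb
  have key : ∀ i : Fin n,
      fderiv ℝ (fderiv ℝ (fun z => ((polKer α β p z : ℝ) : ℂ))) z (basisV n i) (basisV n i) =
      (((2 * α * S ^ m + 2 * m * S ^ (m - 1) * (4 * α * w i ^ 2 + 2 * (β i * w i)) +
        (α * S + b) * (4 * m * (m - 1) * S ^ (m - 1 - 1) * w i ^ 2 + 2 * m * S ^ (m - 1)) : ℝ)) :
          ℂ) := by
    intro i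
    have es : ∀ t : ℝ, ‖z + t • basisV n i - p‖ ^ 2 = S + 2 * t * w i + t ^ 2 := by
      intro t
      rw [show z + t • basisV n i - p = w + t • basisV n i by rw [hw]; abel, norm_add_sq_real,
        norm_smul, norm_basisV, inner_smul_right, inner_basisV', Real.norm_eq_abs, mul_one, sq_abs]
      ring
    have eb : ∀ t : ℝ, ⟪β, z + t • basisV n i - p⟫_ℝ = b + t * β i := by
      intro t
      rw [show z + t • basisV n i - p = w + t • basisV n i by rw [hw]; abel, inner_add_right,
        inner_smul_right, inner_basisV']
    have d1 : ∀ t : ℝ, HasDerivAt (fun t : ℝ => S + 2 * t * w i + t ^ 2) (2 * w i + 2 * t) t := by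
      intro t
      have := (((((hasDerivAt_id' t).const_mul 2).mul_const (w i)).const_add S).add
        ((hasDerivAt_id' t).pow 2))
      convert! this using 1
      simp
    have d2 : ∀ t : ℝ, HasDerivAt (fun t : ℝ => α * (S + 2 * t * w i + t ^ 2) + (b + t * β i))
        (α * (2 * w i + 2 * t) + β i) t := by
      intro t
      have := ((d1 t).const_mul α).add (((hasDerivAt_id' t).mul_const (β i)).const_add b)
      convert! this using 1
      simp
    have hpos : ∀ᶠ t in 𝓝 (0 : ℝ), 0 < S + 2 * t * w i + t ^ 2 := by
      refine (d1 0).continuousAt.eventually (lt_mem_nhds ?_)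
      simpa using hS0
    have d3 : ∀ k : ℝ, ∀ t : ℝ, 0 < S + 2 * t * w i + t ^ 2 → HasDerivAt
        (fun t : ℝ => (S + 2 * t * w i + t ^ 2) ^ k)
        ((2 * w i + 2 * t) * k * (S + 2 * t * w i + t ^ 2) ^ (k - 1)) t :=
      fun k t ht => (d1 t).rpow_const (Or.inl ht.ne')
    refine fderiv_fderiv_of_line (contDiffAt_polKer α β p hz)
      (γ' := fun t => (((α * (2 * w i + 2 * t) + β i) * (S + 2 * t * w i + t ^ 2) ^ m +
        (α * (S + 2 * t * w i + t ^ 2) + (b + t * β i)) *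
        ((2 * w i + 2 * t) * m * (S + 2 * t * w i + t ^ 2) ^ (m - 1)) : ℝ) : ℂ)) ?_ ?_
    · filter_upwards [hpos] with t ht
      simp only [polKer, es, eb]
      exact ((d2 t).mul (d3 m t ht)).ofReal_comp
    · have hp0 : 0 < S + 2 * 0 * w i + 0 ^ 2 := by simpa using hS0
      have d4 : HasDerivAt (fun t : ℝ => 2 * w i + 2 * t) 2 0 := by
        simpa using ((hasDerivAt_id' (0 : ℝ)).const_mul 2).const_add (2 * w i)
      have := (((((d4.const_mul α).add_const (β i)).mul (d3 m 0 hp0)).add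
        ((d2 0).mul ((d4.mul_const m).mul (d3 (m - 1) 0 hp0))))).ofReal_comp
      convert! this using 1
      congr 1
      simp
      ring
  rw [lap_eq, Finset.sum_congr rfl fun i _ => key i, ← Complex.ofReal_sum, ← Complex.ofReal_zero]
  congr 1
  have q1 : ∑ i, w i ^ 2 = S := by
    rw [hS, EuclideanSpace.norm_sq_eq]
    simp
  have q2 : ∑ i, β i * w i = b := by
    rw [hb, PiLp.inner_apply]
    simp [mul_comm]
  have q3 : S ^ (m - 1) = S ^ (m - 1 - 1) * S := by
    conv_lhs => rw [show m - 1 = (m - 1 - 1) + 1 by ring, Real.rpow_add_one hS0.ne']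
  have q4 : S ^ m = S ^ (m - 1 - 1) * S * S := by
    rw [← q3]
    conv_lhs => rw [show m = (m - 1) + 1 by ring, Real.rpow_add_one hS0.ne']
  have hn : (n : ℝ) = -2 * m := by rw [hm]; ring
  simp only [Finset.sum_add_distrib, ← Finset.mul_sum, q1, q2, Finset.sum_const, Finset.card_univ,
    Fintype.card_fin, nsmul_eq_mul, q3, q4]
  rw [hn]
  ring

lemma harmOn_polKer {n : ℕ} (α : ℝ) (β p : Eucl n) {s : Set (Eucl n)} (hp : p ∉ s) :
    HarmOn (fun z => ((polKer α β p z : ℝ) : ℂ)) s :=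
  ⟨fun _ hz => (contDiffAt_polKer α β p (fun h => hp (h ▸ hz))).contDiffWithinAt,
    fun _ hz => lap_polKer α β p (fun h => hp (h ▸ hz))⟩

lemma continuousAt_polKer {n : ℕ} (α : ℝ) (β p : Eucl n) {z : Eucl n} (hz : z ≠ p) :
    ContinuousAt (fun z => ((polKer α β p z : ℝ) : ℂ)) z := (contDiffAt_polKer α β p hz).continuousAt

lemma harmOn_congr {n : ℕ} {f g : Eucl n → ℂ} {s : Set (Eucl n)} (hs : IsOpen s)
    (hf : HarmOn f s) (h : EqOn g f s) : HarmOn g s := by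
  refine ⟨hf.1.congr h, fun x hx => ?_⟩
  rw [← hf.2 x hx, lap, lap, (h.eventuallyEq_of_mem (hs.mem_nhds hx)).iteratedFDeriv ℝ 2 |>.eq_of_nhds]

/-- The point symmetric to `y` with respect to the unit sphere is the pole of `P_y`. -/
lemma extPoisson_denom {n : ℕ} {y : Eucl n} (hy : y ≠ 0) (z : Eucl n) :
    1 - 2 * ⟪z, y⟫_ℝ + ‖z‖ ^ 2 * ‖y‖ ^ 2 = ‖y‖ ^ 2 * ‖z - (‖y‖ ^ 2)⁻¹ • y‖ ^ 2 := by
  have h : ‖y‖ ≠ 0 := norm_ne_zero_iff.2 hy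
  rw [norm_sub_sq_real, norm_smul, inner_smul_right, norm_inv, norm_pow, norm_norm]
  field_simp
  ring

lemma extPoisson_eq_polKer {n : ℕ} {y : Eucl n} (hy : y ≠ 0) (z : Eucl n) :
    extPoisson n y z = polKer (-(‖y‖ ^ 2 * (‖y‖ ^ 2) ^ (-((n : ℝ) / 2))))
      ((-2 * (‖y‖ ^ 2) ^ (-((n : ℝ) / 2))) • y) ((‖y‖ ^ 2)⁻¹ • y) z := by
  have h : ‖y‖ ≠ 0 := norm_ne_zero_iff.2 hy
  rw [extPoisson, extPoisson_denom hy, Real.mul_rpow (by positivity) (by positivity), polKer,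
    Real.rpow_neg (by positivity), Real.rpow_neg (by positivity), div_eq_mul_inv, mul_inv,
    ← mul_assoc]
  congr 1
  have e : 1 - ‖z‖ ^ 2 * ‖y‖ ^ 2 = -(‖y‖ ^ 2) * ‖z - (‖y‖ ^ 2)⁻¹ • y‖ ^ 2 +
      (-2) * ⟪y, z - (‖y‖ ^ 2)⁻¹ • y⟫_ℝ := by
    rw [neg_mul, ← extPoisson_denom hy, inner_sub_right, inner_smul_right,
      real_inner_self_eq_norm_sq, real_inner_comm]
    field_simp
    ring
  rw [e, inner_smul_left]
  simp
  ring

lemma extPoisson_zero {n : ℕ} (z : Eucl n) : extPoisson n 0 z = 1 := by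
  simp [extPoisson]

lemma one_lt_norm_dual {n : ℕ} {y : Eucl n} (hy : y ≠ 0) {z : Eucl n} (h : ‖z‖ * ‖y‖ < 1) :
    z ≠ (‖y‖ ^ 2)⁻¹ • y := by
  rintro rfl
  have h0 : ‖y‖ ≠ 0 := norm_ne_zero_iff.2 hy
  rw [norm_smul, norm_inv, norm_pow, norm_norm] at h
  field_simp at h
  exact lt_irrefl _ h

lemma harmOn_extPoisson {n : ℕ} {y : Eucl n} (hy : ‖y‖ ≤ 1) :
    HarmOn (fun z => ((extPoisson n y z : ℝ) : ℂ)) (uBall n) := by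
  by_cases h0 : y = 0
  · subst h0
    simpa only [extPoisson_zero] using harmOn_const _ _
  · simp only [extPoisson_eq_polKer h0]
    refine harmOn_polKer _ _ _ fun h => one_lt_norm_dual h0 ?_ rfl
    rw [mem_uBall] at h
    nlinarith [norm_nonneg y, norm_nonneg ((‖y‖ ^ 2)⁻¹ • y)]

lemma continuousAt_extPoisson {n : ℕ} {y z : Eucl n} (h : ‖z‖ * ‖y‖ < 1) :
    ContinuousAt (fun z => ((extPoisson n y z : ℝ) : ℂ)) z := by
  by_cases h0 : y = 0
  · subst h0
    simpa only [extPoisson_zero] using continuousAt_const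
  · simp only [extPoisson_eq_polKer h0]
    exact continuousAt_polKer _ _ _ (one_lt_norm_dual h0 h)

lemma extPoisson_comm {n : ℕ} (x y : Eucl n) : extPoisson n x y = extPoisson n y x := by
  rw [extPoisson, extPoisson, real_inner_comm, mul_comm (‖x‖ ^ 2)]

/-! ### The Poisson formula -/

lemma extPoisson_smul {n : ℕ} (c : ℝ) (y z : Eucl n) :
    extPoisson n (c • y) z = extPoisson n y (c • z) := by
  simp only [extPoisson, inner_smul_left, inner_smul_right, norm_smul, mul_pow]
  simp
  ring_nf

lemma extPoisson_unit {n : ℕ} {η ζ : Eucl n} (hη : ‖η‖ = 1) (hζ : ‖ζ‖ = 1) (s : ℝ) :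
    extPoisson n η (s • ζ) = (1 - s ^ 2) / (‖s • ζ - η‖ ^ 2) ^ ((n : ℝ) / 2) := by
  rw [extPoisson, norm_sub_sq_real, norm_smul, hζ, hη, mul_one, Real.norm_eq_abs, sq_abs]
  ring_nf

lemma extPoisson_unit_nonneg {n : ℕ} {η ζ : Eucl n} (hη : ‖η‖ = 1) (hζ : ‖ζ‖ = 1) {s : ℝ}
    (hs : s ∈ Ioo (0 : ℝ) 1) : 0 ≤ extPoisson n η (s • ζ) := by
  rw [extPoisson_unit hη hζ]
  have : 0 ≤ 1 - s ^ 2 := by nlinarith [hs.1, hs.2]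
  positivity

/-- Away from `η`, the kernel `P_η(s ·)` is at most a multiple of `1 - s²` that is uniform in `s`. -/
lemma extPoisson_unit_le {n : ℕ} {η ζ : Eucl n} (hη : ‖η‖ = 1) (hζ : ‖ζ‖ = 1) {s δ : ℝ}
    (hs : s ∈ Ioo (0 : ℝ) 1) (hδ : 0 < δ) (h1 : δ ≤ ‖ζ - η‖) (h2 : 1 - s ≤ δ / 2) :
    extPoisson n η (s • ζ) ≤ (1 - s ^ 2) / ((δ / 2) ^ 2) ^ ((n : ℝ) / 2) := by
  rw [extPoisson_unit hη hζ]
  have h3 : 0 ≤ 1 - s ^ 2 := by nlinarith [hs.1, hs.2]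
  have h4 : δ / 2 ≤ ‖s • ζ - η‖ := by
    have : ‖ζ - η‖ ≤ ‖s • ζ - η‖ + ‖(1 - s) • ζ‖ := by
      refine le_trans (le_of_eq ?_) (norm_add_le _ _)
      congr 1
      module
    rw [norm_smul, hζ, mul_one, Real.norm_of_nonneg (by linarith [hs.2])] at this
    linarith
  gcongr

lemma integrable_poisson {n : ℕ} (hn : 2 ≤ n) {y : Eucl n} (hy : ‖y‖ < 1) :
    ContinuousOn (fun z => ((extPoisson n y z : ℝ) : ℂ)) (uSphere n) ∧
      Integrable (fun z => ((extPoisson n y z : ℝ) : ℂ)) (sphMeasure n) := by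
  have : ContinuousOn (fun z => ((extPoisson n y z : ℝ) : ℂ)) (uSphere n) := fun z hz =>
    (continuousAt_extPoisson (by rwa [mem_uSphere.1 hz, one_mul])).continuousWithinAt
  exact ⟨this, integrable_sph hn this⟩

lemma poisson_mass {n : ℕ} (hn : 2 ≤ n) {η : Eucl n} (hη : ‖η‖ = 1) {s : ℝ}
    (hs : s ∈ Ioo (0 : ℝ) 1) : ∫ ζ, extPoisson n η (s • ζ) ∂(sphMeasure n) = 1 := by
  have := mean_value hn (harmOn_extPoisson hη.le) hs
  rw [integral_complex_ofReal] at this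
  have h0 : extPoisson n η 0 = 1 := by simp [extPoisson]
  rw [h0] at this
  exact_mod_cast this

/-- The Poisson formula for a dilate `u(r ·)`.  For `y = ρη` with `‖η‖ = 1` the integral equals
`∫ u(tζ) P_η((rρ/t) ζ) dσ(ζ)` for every `t ∈ (rρ, 1)`, and `P_η(s ·)` is an approximate identity at
`η` as `s → 1`. -/
lemma poisson_formula {n : ℕ} (hn : 2 ≤ n) {u : Eucl n → ℂ} (hu : HarmOn u (uBall n)) {r : ℝ}
    (hr : r ∈ Ioo (0 : ℝ) 1) {y : Eucl n} (hy : ‖y‖ < 1) :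
    ∫ ζ, u (r • ζ) * ((extPoisson n y ζ : ℝ) : ℂ) ∂(sphMeasure n) = u (r • y) := by
  have := sphMeasure_prob hn
  by_cases h0 : y = 0
  · subst h0
    simpa [extPoisson_zero] using mean_value hn hu hr
  set ρ := ‖y‖ with hρ
  have hρ0 : 0 < ρ := norm_pos_iff.2 h0
  set η := ρ⁻¹ • y with hηdef
  have hyη : y = ρ • η := by rw [hηdef, smul_inv_smul₀ hρ0.ne']
  have hη : ‖η‖ = 1 := by
    rw [hηdef, norm_smul, norm_inv, norm_norm, ← hρ, inv_mul_cancel₀ hρ0.ne']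
  set c := r * ρ with hc
  have hc0 : 0 < c := mul_pos hr.1 hρ0
  have hcr : c < r := by nlinarith [hr.1]
  set v : Eucl n → ℂ := fun z => ((extPoisson n η z : ℝ) : ℂ) with hv
  have hvh : HarmOn v (uBall n) := harmOn_extPoisson hη.le
  set I := ∫ ζ, u (r • ζ) * ((extPoisson n y ζ : ℝ) : ℂ) ∂(sphMeasure n) with hI
  have hIt : ∀ t ∈ Ioo c 1, I = ∫ ζ, u (t • ζ) * v ((c / t) • ζ) ∂(sphMeasure n) := by
    intro t ht
    rw [← pairing_dil hn hu hvh hc0 ⟨hcr, hr.2⟩ ht, hI]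
    congr 1
    funext ζ
    rw [hv, show c / r = ρ by rw [hc]; field_simp [hr.1.ne'], hyη, extPoisson_smul]
  have huc : ContinuousOn u (uBall n) := hu.1.continuousOn
  obtain ⟨M, hM⟩ : ∃ M, ∀ z ∈ closedBall (0 : Eucl n) r, ‖u z‖ ≤ M :=
    (isCompact_closedBall (0 : Eucl n) r).exists_bound_of_continuousOn
      (huc.mono (closedBall_subset_ball hr.2))
  have hcη : c • η ∈ closedBall (0 : Eucl n) r := by
    rw [mem_closedBall_zero_iff, norm_smul, hη, mul_one, Real.norm_of_nonneg hc0.le]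
    exact hcr.le
  have hM0 : 0 ≤ M := (norm_nonneg _).trans (hM _ hcη)
  have hry : r • y = c • η := by rw [hyη, smul_smul, hc]
  rw [hry]
  suffices h : ∀ ε > 0, ‖I - u (c • η)‖ ≤ ε by
    rw [← sub_eq_zero, ← norm_le_zero_iff]
    exact le_of_forall_pos_le_add (by simpa using h)
  intro ε hε
  have hcont : Tendsto (fun p : ℝ × Eucl n => u (p.1 • p.2)) (𝓝 (c, η)) (𝓝 (u (c • η))) := by
    have h1 : ContinuousAt u (c • η) :=
      huc.continuousAt (isOpen_ball.mem_nhds (closedBall_subset_ball hr.2 hcη))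
    exact ContinuousAt.comp (f := fun p : ℝ × Eucl n => p.1 • p.2) (x := (c, η)) h1 (by fun_prop)
  obtain ⟨δ, hδ, hclose⟩ := Metric.tendsto_nhds_nhds.1 hcont ε hε
  -- mass near `η` contributes at most `ε`, mass away from `η` disappears in the limit
  have hbound : ∀ᶠ t in 𝓝[>] c, ‖I - u (c • η)‖ ≤
      ε + 2 * M * ((1 - (c / t) ^ 2) / ((δ / 2) ^ 2) ^ ((n : ℝ) / 2)) := by
    have hnear : ∀ᶠ t in 𝓝[>] c, 1 - c / t ≤ δ / 2 := by
      have : Tendsto (fun t : ℝ => 1 - c / t) (𝓝[>] c) (𝓝 (1 - c / c)) :=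
        ((continuousAt_const.sub (continuousAt_const.div continuousAt_id hc0.ne')).tendsto).mono_left
          nhdsWithin_le_nhds
      rw [div_self hc0.ne', sub_self] at this
      exact (this.eventually (gt_mem_nhds (half_pos hδ))).mono fun t ht => le_of_lt ht
    have hd : ∀ᶠ t in 𝓝[>] c, dist t c < δ := nhdsWithin_le_nhds (ball_mem_nhds c hδ)
    filter_upwards [Ioo_mem_nhdsGT hcr, hnear, hd] with t ht hnear hd
    have ht0 : 0 < t := hc0.trans ht.1
    have hs : c / t ∈ Ioo (0 : ℝ) 1 := ⟨div_pos hc0 ht0, (div_lt_one ht0).2 ht.1⟩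
    have hmaps1 : ∀ ζ ∈ uSphere n, t • ζ ∈ ball (0 : Eucl n) 1 := fun ζ hζ =>
      smul_mem_ball_of ⟨by linarith, ht.2.trans hr.2⟩ (mem_uSphere.1 hζ)
    have hmaps2 : ∀ ζ ∈ uSphere n, (c / t) • ζ ∈ ball (0 : Eucl n) 1 := fun ζ hζ =>
      smul_mem_ball_of ⟨by linarith [hs.1], hs.2⟩ (mem_uSphere.1 hζ)
    have cu : ContinuousOn (fun ζ => u (t • ζ)) (uSphere n) := huc.comp (by fun_prop) hmaps1
    have cv : ContinuousOn (fun ζ => v ((c / t) • ζ)) (uSphere n) :=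
      hvh.1.continuousOn.comp (by fun_prop) hmaps2
    have hmass : ∫ ζ, v ((c / t) • ζ) ∂(sphMeasure n) = 1 := by
      rw [hv, integral_complex_ofReal, poisson_mass hn hη hs, Complex.ofReal_one]
    have e1 : I - u (c • η) = ∫ ζ, (u (t • ζ) - u (c • η)) * v ((c / t) • ζ) ∂(sphMeasure n) := by
      simp_rw [sub_mul]
      rw [integral_sub (f := fun ζ => u (t • ζ) * v ((c / t) • ζ))
        (g := fun ζ => u (c • η) * v ((c / t) • ζ)) (integrable_sph hn (cu.mul cv))
        (integrable_sph hn (continuousOn_const.mul cv)), integral_const_mul, hmass, mul_one,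
        ← hIt t ⟨ht.1, ht.2.trans hr.2⟩]
    set C := (1 - (c / t) ^ 2) / ((δ / 2) ^ 2) ^ ((n : ℝ) / 2) with hC
    have hC0 : 0 ≤ C := by
      have : 0 ≤ 1 - (c / t) ^ 2 := by nlinarith [hs.1, hs.2]
      positivity
    have iv : Integrable (fun ζ => extPoisson n η ((c / t) • ζ)) (sphMeasure n) := by
      simpa [hv] using (integrable_sph hn cv).re
    rw [e1]
    calc _ ≤ ∫ ζ, (ε * extPoisson n η ((c / t) • ζ) + 2 * M * C) ∂(sphMeasure n) := by
          refine norm_integral_le_of_norm_le ((iv.const_mul ε).add (integrable_const _)) ?_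
          filter_upwards [ae_sphere n] with ζ hζ
          have hP := extPoisson_unit_nonneg (n := n) hη hζ hs
          rw [norm_mul, hv, Complex.norm_real, Real.norm_of_nonneg hP]
          by_cases hfar : ‖ζ - η‖ < δ
          · have : dist (u (t • ζ)) (u (c • η)) < ε := hclose (x := (t, ζ)) (by
              rw [Prod.dist_eq, max_lt_iff, dist_eq_norm ζ η]
              exact ⟨hd, hfar⟩)
            rw [dist_eq_norm] at this
            have h5 : 0 ≤ 2 * M * C := by positivity
            nlinarith [mul_le_mul_of_nonneg_right this.le hP]
          · have h6 : ‖u (t • ζ) - u (c • η)‖ ≤ 2 * M := by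
              refine (norm_sub_le _ _).trans ?_
              have : ‖u (t • ζ)‖ ≤ M := hM _ (by
                rw [mem_closedBall_zero_iff, norm_smul, hζ, mul_one, Real.norm_of_nonneg ht0.le]
                exact ht.2.le)
              linarith [hM _ hcη]
            have h7 := extPoisson_unit_le (n := n) hη hζ hs hδ (not_lt.1 hfar) hnear
            have := mul_le_mul h6 h7 hP (by positivity)
            have h8 := mul_nonneg hε.le hP
            linarith
      _ = ε + 2 * M * C := by
          rw [integral_add (iv.const_mul ε) (integrable_const _), integral_const_mul,
            poisson_mass hn hη hs]
          simp
  have hlim : Tendsto (fun t : ℝ => ε + 2 * M * ((1 - (c / t) ^ 2) / ((δ / 2) ^ 2) ^ ((n : ℝ) / 2)))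
      (𝓝[>] c) (𝓝 (ε + 2 * M * ((1 - (c / c) ^ 2) / ((δ / 2) ^ 2) ^ ((n : ℝ) / 2)))) := by
    have h1 : Tendsto (fun t : ℝ => c / t) (𝓝[>] c) (𝓝 (c / c)) :=
      ((continuousAt_const.div continuousAt_id hc0.ne').tendsto).mono_left nhdsWithin_le_nhds
    exact ((((h1.pow 2).const_sub 1).div_const _).const_mul _).const_add _
  have := ge_of_tendsto hlim hbound
  simpa [div_self hc0.ne'] using this

/-! ### Boundary functions -/

/-- A family bounded in `L^q`, `q > 1`, on a finite measure space is uniformly integrable, so that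
almost everywhere convergence implies convergence of the integrals. -/
lemma tendsto_integral_of_bounded {α : Type*} [MeasurableSpace α] {μ : Measure α}
    [IsFiniteMeasure μ] {q : ℝ≥0∞} (hq : 1 < q) {F : ℕ → α → ℂ} {g : α → ℂ} {M : ℝ≥0}
    (hF : ∀ k, AEStronglyMeasurable (F k) μ) (hM : ∀ k, eLpNorm (F k) q μ ≤ M)
    (hlim : ∀ᵐ x ∂μ, Tendsto (fun k => F k x) atTop (𝓝 (g x))) :
    Tendsto (fun k => ∫ x, F k x ∂μ) atTop (𝓝 (∫ x, g x ∂μ)) := by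
  have hgm : AEStronglyMeasurable g μ := aestronglyMeasurable_of_tendsto_ae atTop hF hlim
  have hgq : MemLp g q μ := by
    refine ⟨hgm, (Lp.eLpNorm_lim_le_liminf_eLpNorm hF g hlim).trans_lt ?_⟩
    refine lt_of_le_of_lt (b := (M : ℝ≥0∞)) ?_ ENNReal.coe_lt_top
    refine liminf_le_of_le (by isBoundedDefault) fun b hb => ?_
    obtain ⟨k, hk⟩ := hb.exists
    exact hk.trans (hM k)
  have hFint : ∀ k, Integrable (F k) μ := fun k =>
    MemLp.integrable hq.le ⟨hF k, (hM k).trans_lt ENNReal.coe_lt_top⟩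
  set e : ℝ := 1 / (1 : ℝ≥0∞).toReal - 1 / q.toReal with he
  have he0 : 0 < e := by
    rw [he, ENNReal.toReal_one, div_one, sub_pos]
    by_cases hqt : q = ⊤
    · simp [hqt]
    · have h1 : 1 < q.toReal := by
        rwa [← ENNReal.toReal_one, ENNReal.toReal_lt_toReal ENNReal.one_ne_top hqt]
      exact (div_lt_one (by linarith)).2 h1
  have hui : UnifIntegrable F 1 μ := by
    intro ε hε
    have hM1 : (0 : ℝ) < M + 1 := by positivity
    refine ⟨(ε / (M + 1)) ^ e⁻¹, by positivity, fun k s hs hμ => ?_⟩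
    rw [eLpNorm_indicator_eq_eLpNorm_restrict hs]
    calc eLpNorm (F k) 1 (μ.restrict s)
        ≤ eLpNorm (F k) q (μ.restrict s) * (μ.restrict s) univ ^ e :=
          eLpNorm_le_eLpNorm_mul_rpow_measure_univ hq.le (hF k).restrict
      _ ≤ M * ENNReal.ofReal ((ε / (M + 1)) ^ e⁻¹) ^ e := by
          rw [Measure.restrict_apply_univ]
          exact mul_le_mul' ((eLpNorm_mono_measure _ Measure.restrict_le_self).trans (hM k))
            (ENNReal.rpow_le_rpow hμ he0.le)
      _ = ENNReal.ofReal (M * (ε / (M + 1))) := by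
          rw [ENNReal.ofReal_rpow_of_nonneg (by positivity) he0.le, ← Real.rpow_mul (by positivity),
            inv_mul_cancel₀ he0.ne', Real.rpow_one, ENNReal.ofReal_mul M.coe_nonneg,
            ENNReal.ofReal_coe_nnreal]
      _ ≤ ENNReal.ofReal ε := by
          refine ENNReal.ofReal_le_ofReal ?_
          rw [← mul_div_assoc, div_le_iff₀ hM1]
          nlinarith [M.2]
  exact tendsto_integral_of_L1' g hgm (Eventually.of_forall hFint)
    (tendsto_Lp_finite_of_tendsto_ae le_rfl ENNReal.one_ne_top hF (hgq.mono_exponent hq.le) hui hlim)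

lemma continuousOn_slice {n : ℕ} {f : Eucl n → ℂ} (hf : ContinuousOn f (uBall n)) {r : ℝ}
    (hr : r ∈ Ico (0 : ℝ) 1) : ContinuousOn (fun ζ => f (r • ζ)) (uSphere n) :=
  hf.comp (by fun_prop) fun ζ hζ =>
    smul_mem_ball_of (R := 1) ⟨by linarith [hr.1], hr.2⟩ (mem_uSphere.1 hζ)

/-- The dilates of an `h^q` function are bounded in `L^q` of the sphere. -/
lemma MemHp.eLpNorm_bound {n : ℕ} (hn : 2 ≤ n) {q : ℝ≥0∞} (hq : 1 ≤ q) {h : Eucl n → ℂ}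
    (hh : MemHp n q h) : ∃ M : ℝ≥0, ∀ r ∈ Ico (0 : ℝ) 1,
      eLpNorm (fun ζ => h (r • ζ)) q (sphMeasure n) ≤ M := by
  have := sphMeasure_prob hn
  obtain ⟨hharm, hb⟩ := hh
  by_cases hqt : q = ⊤
  · rw [if_pos hqt] at hb
    obtain ⟨C, hC⟩ := hb
    refine ⟨C.toNNReal, fun r hr => ?_⟩
    rw [hqt, eLpNorm_exponent_top]
    refine eLpNormEssSup_le_of_ae_bound ?_
    filter_upwards [ae_sphere n] with ζ hζ
    exact hC ⟨r • ζ, smul_mem_ball_of (R := 1) ⟨by linarith [hr.1], hr.2⟩ hζ, rfl⟩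
  · rw [if_neg hqt] at hb
    obtain ⟨C, hC⟩ := hb
    refine ⟨C.toNNReal, fun r hr => ?_⟩
    have hc := continuousOn_slice hharm.1.continuousOn hr
    obtain ⟨K, hK⟩ := (isCompact_uSphere n).exists_bound_of_continuousOn hc
    have hmem : MemLp (fun ζ => h (r • ζ)) q (sphMeasure n) := by
      refine MemLp.of_bound (integrable_sph hn hc).aestronglyMeasurable K ?_
      filter_upwards [ae_sphere n] with ζ hζ
      exact hK ζ (mem_uSphere.2 hζ)
    rw [hmem.eLpNorm_eq_integral_rpow_norm (by positivity) hqt, ← one_div]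
    exact ENNReal.ofReal_le_ofReal (hC ⟨r, hr, rfl⟩)

lemma nt_radial {n : ℕ} {g : Eucl n → ℂ} {ζ : Eucl n} {L : ℂ} (hζ : ‖ζ‖ = 1)
    (h : HasNTLimit n g ζ L) : Tendsto (fun r : ℝ => g (r • ζ)) (𝓝[<] 1) (𝓝 L) := by
  refine (h 3 (by norm_num)).comp (tendsto_nhdsWithin_iff.2 ⟨?_, ?_⟩)
  · have : Tendsto (fun r : ℝ => r • ζ) (𝓝 1) (𝓝 ((1 : ℝ) • ζ)) :=
      (continuous_id.smul continuous_const).tendsto 1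
    rw [one_smul] at this
    exact this.mono_left nhdsWithin_le_nhds
  · filter_upwards [Ioo_mem_nhdsLT (show (0 : ℝ) < 1 by norm_num)] with r hr
    refine ⟨smul_mem_ball_of (R := 1) ⟨by linarith [hr.1], hr.2⟩ hζ, ?_⟩
    rw [show r • ζ - ζ = (r - 1) • ζ by module, norm_smul, norm_smul, hζ, mul_one, mul_one,
      Real.norm_of_nonpos (by linarith [hr.2]), Real.norm_of_nonneg hr.1.le]
    nlinarith [hr.1, hr.2]

/-- A nontangential limit of a function with a continuous extension is its boundary value. -/
lemma nt_eq_of_continuousAt {n : ℕ} {g K : Eucl n → ℂ} {ζ : Eucl n} {L : ℂ} (hζ : ‖ζ‖ = 1)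
    (h : HasNTLimit n g ζ L) (hgK : EqOn g K (uBall n)) (hK : ContinuousAt K ζ) : L = K ζ := by
  have h1 : Tendsto (fun r : ℝ => K (r • ζ)) (𝓝[<] 1) (𝓝 (K ζ)) := by
    have h2 : ContinuousAt (fun r : ℝ => K (r • ζ)) 1 :=
      ContinuousAt.comp (f := fun r : ℝ => r • ζ) (x := 1) (by rwa [one_smul]) (by fun_prop)
    have := h2.tendsto
    rw [one_smul] at this
    exact this.mono_left nhdsWithin_le_nhds
  refine tendsto_nhds_unique (nt_radial hζ h) (h1.congr' ?_)
  filter_upwards [Ioo_mem_nhdsLT (show (0 : ℝ) < 1 by norm_num)] with r hr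
  exact (hgK (smul_mem_ball_of (R := 1) ⟨by linarith [hr.1], hr.2⟩ hζ)).symm

lemma tendsto_seq_one : Tendsto (fun k : ℕ => 1 - 1 / ((k : ℝ) + 2)) atTop (𝓝[<] 1) := by
  refine tendsto_nhdsWithin_iff.2 ⟨?_, Eventually.of_forall fun k => ?_⟩
  · have : Tendsto (fun k : ℕ => 1 / ((k : ℝ) + 2)) atTop (𝓝 0) :=
      tendsto_const_nhds.div_atTop
        (tendsto_atTop_add_const_right _ _ tendsto_natCast_atTop_atTop)
    simpa using this.const_sub 1
  · have : 0 < 1 / ((k : ℝ) + 2) := by positivity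
    simp only [mem_Iio]
    linarith

lemma seq_mem (k : ℕ) : 1 - 1 / ((k : ℝ) + 2) ∈ Ioo (0 : ℝ) 1 := by
  have h1 : 0 < 1 / ((k : ℝ) + 2) := by positivity
  have h2 : 1 / ((k : ℝ) + 2) < 1 := by
    rw [div_lt_one (by positivity)]
    have : (0 : ℝ) ≤ k := Nat.cast_nonneg k
    linarith
  constructor <;> linarith

/-- An `h^q` function with `q > 1` is the Poisson integral of its nontangential boundary
function. -/
lemma poisson_bd {n : ℕ} (hn : 2 ≤ n) {q : ℝ≥0∞} (hq : 1 < q) {h b : Eucl n → ℂ}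
    (hh : MemHp n q h) (hb : ∀ᵐ ζ ∂(sphMeasure n), HasNTLimit n h ζ (b ζ)) {x : Eucl n}
    (hx : ‖x‖ < 1) :
    ∫ ζ, b ζ * ((extPoisson n x ζ : ℝ) : ℂ) ∂(sphMeasure n) = h x := by
  have := sphMeasure_prob hn
  obtain ⟨M, hM⟩ := hh.eLpNorm_bound hn hq.le
  set P : Eucl n → ℂ := fun ζ => ((extPoisson n x ζ : ℝ) : ℂ) with hP
  obtain ⟨hPc, -⟩ := integrable_poisson hn hx
  obtain ⟨C, hC⟩ := (isCompact_uSphere n).exists_bound_of_continuousOn hPc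
  set r : ℕ → ℝ := fun k => 1 - 1 / ((k : ℝ) + 2) with hr
  have hr' : ∀ k, r k ∈ Ico (0 : ℝ) 1 := fun k => ⟨(seq_mem k).1.le, (seq_mem k).2⟩
  have key := tendsto_integral_of_bounded (μ := sphMeasure n) hq
    (F := fun k ζ => h (r k • ζ) * P ζ) (g := fun ζ => b ζ * P ζ) (M := C.toNNReal * M)
    (fun k => (integrable_sph hn
      ((continuousOn_slice hh.1.1.continuousOn (hr' k)).mul hPc)).aestronglyMeasurable)
    (fun k => by
      have h1 : ∀ᵐ ζ ∂(sphMeasure n), ‖h (r k • ζ) * P ζ‖ ≤ C * ‖h (r k • ζ)‖ := by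
        filter_upwards [ae_sphere n] with ζ hζ
        rw [norm_mul, mul_comm]
        exact mul_le_mul_of_nonneg_right (hC ζ (mem_uSphere.2 hζ)) (norm_nonneg _)
      refine (eLpNorm_le_mul_eLpNorm_of_ae_le_mul h1 q).trans ?_
      rw [ENNReal.coe_mul]
      exact mul_le_mul' le_rfl (hM _ (hr' k)))
    (by
      filter_upwards [hb, ae_sphere n] with ζ hζ hζ1
      exact ((nt_radial hζ1 hζ).comp tendsto_seq_one).mul_const _)
  refine tendsto_nhds_unique key ?_
  have hpf : ∀ k, ∫ ζ, h (r k • ζ) * P ζ ∂(sphMeasure n) = h (r k • x) := fun k =>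
    poisson_formula hn hh.1 (seq_mem k) hx
  simp only [hpf]
  have h2 : ContinuousAt h x :=
    hh.1.1.continuousOn.continuousAt (isOpen_ball.mem_nhds (mem_ball_zero_iff.2 hx))
  have h3 : Tendsto (fun r : ℝ => h (r • x)) (𝓝[<] 1) (𝓝 (h x)) := by
    have h4 : ContinuousAt (fun r : ℝ => h (r • x)) 1 :=
      ContinuousAt.comp (f := fun r : ℝ => r • x) (x := 1) (by rwa [one_smul]) (by fun_prop)
    have := h4.tendsto
    rw [one_smul] at this
    exact this.mono_left nhdsWithin_le_nhds
  exact h3.comp tendsto_seq_one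

/-- Bounded harmonic functions belong to every `h^p`. -/
lemma memHp_of_bounded {n : ℕ} (hn : 2 ≤ n) {f : Eucl n → ℂ} (hf : HarmOn f (uBall n)) {C : ℝ}
    (hC : ∀ z ∈ uBall n, ‖f z‖ ≤ C) (p : ℝ≥0∞) : MemHp n p f := by
  have := sphMeasure_prob hn
  refine ⟨hf, ?_⟩
  split_ifs with hp
  · exact ⟨C, by rintro _ ⟨z, hz, rfl⟩; exact hC z hz⟩
  · have hC0 : 0 ≤ C := (norm_nonneg _).trans (hC 0 (by simp [mem_uBall]))
    refine ⟨(C ^ p.toReal) ^ (1 / p.toReal), ?_⟩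
    rintro _ ⟨r, hr, rfl⟩
    refine Real.rpow_le_rpow (integral_nonneg fun ζ => by positivity) ?_ (by positivity)
    have hle : ∀ᵐ ζ ∂(sphMeasure n), ‖f (r • ζ)‖ ^ p.toReal ≤ C ^ p.toReal := by
      filter_upwards [ae_sphere n] with ζ hζ
      exact Real.rpow_le_rpow (norm_nonneg _)
        (hC _ (smul_mem_ball_of (R := 1) ⟨by linarith [hr.1], hr.2⟩ hζ)) ENNReal.toReal_nonneg
    have := integral_mono_of_nonneg (Eventually.of_forall fun ζ => by positivity)
      (integrable_const (C ^ p.toReal)) hle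
    simpa using this

lemma memHp_of_continuous {n : ℕ} (hn : 2 ≤ n) {f K : Eucl n → ℂ} (hf : HarmOn f (uBall n))
    (hfK : EqOn f K (uBall n)) (hK : ContinuousOn K (closedBall 0 1)) (p : ℝ≥0∞) :
    MemHp n p f := by
  obtain ⟨C, hC⟩ := (isCompact_closedBall (0 : Eucl n) 1).exists_bound_of_continuousOn hK
  exact memHp_of_bounded hn hf (C := C)
    (fun z hz => by rw [hfK hz]; exact hC z (ball_subset_closedBall hz)) p

lemma memHp_extPoisson {n : ℕ} (hn : 2 ≤ n) {y : Eucl n} (hy : ‖y‖ < 1) (p : ℝ≥0∞) :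
    MemHp n p (fun z => ((extPoisson n y z : ℝ) : ℂ)) := by
  refine memHp_of_continuous hn (harmOn_extPoisson hy.le) (fun _ _ => rfl) (fun z hz => ?_) p
  rw [mem_closedBall_zero_iff] at hz
  exact (continuousAt_extPoisson (by nlinarith [norm_nonneg y])).continuousWithinAt

/-- The Poisson formula for functions continuous up to the boundary. -/
lemma poisson_formula_continuous {n : ℕ} (hn : 2 ≤ n) {K : Eucl n → ℂ} (hK : HarmOn K (uBall n))
    (hKc : ∀ ζ, ‖ζ‖ ≤ 1 → ContinuousAt K ζ) {y : Eucl n} (hy : ‖y‖ < 1) :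
    ∫ ζ, K ζ * ((extPoisson n y ζ : ℝ) : ℂ) ∂(sphMeasure n) = K y := by
  refine poisson_bd hn (q := ⊤) (by simp) (memHp_of_continuous hn hK (fun _ _ => rfl)
    (fun z hz => (hKc z (mem_closedBall_zero_iff.1 hz)).continuousWithinAt) ⊤) ?_ hy
  filter_upwards [ae_sphere n] with ζ hζ
  exact fun δ _ => (hKc ζ hζ.le).tendsto.mono_left nhdsWithin_le_nhds

/-! ### Normal forms of Möbius transformations -/

/-- The reflection in the hyperplane orthogonal to `q`. -/
noncomputable def hypRefl {n : ℕ} (q : Eucl n) : Eucl n ≃ₗᵢ[ℝ] Eucl n :=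
  (Submodule.span ℝ {q})ᗮ.reflection

lemma hypRefl_apply {n : ℕ} (q x : Eucl n) : hypRefl q x = x - (2 * (⟪q, x⟫_ℝ / ‖q‖ ^ 2)) • q := by
  rw [hypRefl, Submodule.reflection_orthogonal_apply, Submodule.reflection_singleton_apply]
  simp only [RCLike.ofReal_real_eq_id, id]
  module

lemma hypRefl_self {n : ℕ} {q : Eucl n} (hq : q ≠ 0) : hypRefl q q = -q := by
  have : ‖q‖ ≠ 0 := norm_ne_zero_iff.2 hq
  rw [hypRefl_apply, real_inner_self_eq_norm_sq, div_self (by positivity)]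
  module

/-- The composition of an inversion, a translation and an inversion. -/
lemma inversion_identity {n : ℕ} {w q : Eucl n} (hw : w ≠ 0) (hq : q ≠ 0) (hwq : w ≠ q) :
    (‖(‖w‖ ^ 2)⁻¹ • w - (‖q‖ ^ 2)⁻¹ • q‖ ^ 2)⁻¹ • ((‖w‖ ^ 2)⁻¹ • w - (‖q‖ ^ 2)⁻¹ • q)
      = -q + (‖q‖ ^ 2 / ‖w - q‖ ^ 2) • hypRefl q (w - q) := by
  have h1 : ‖w‖ ≠ 0 := norm_ne_zero_iff.2 hw
  have h2 : ‖q‖ ≠ 0 := norm_ne_zero_iff.2 hq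
  have h3 : ‖w - q‖ ≠ 0 := norm_ne_zero_iff.2 (sub_ne_zero.2 hwq)
  have e1 : ‖w - q‖ ^ 2 = ‖w‖ ^ 2 - 2 * ⟪w, q⟫_ℝ + ‖q‖ ^ 2 := norm_sub_sq_real w q
  have e2 : ‖(‖w‖ ^ 2)⁻¹ • w - (‖q‖ ^ 2)⁻¹ • q‖ ^ 2 = ‖w - q‖ ^ 2 / (‖w‖ ^ 2 * ‖q‖ ^ 2) := by
    rw [norm_sub_sq_real, e1, norm_smul, norm_smul, inner_smul_left, inner_smul_right]
    simp
    field_simp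
    ring
  rw [e2, hypRefl_apply, inner_sub_right, real_inner_self_eq_norm_sq, real_inner_comm]
  have e3 : 2 * ⟪w, q⟫_ℝ = ‖w‖ ^ 2 + ‖q‖ ^ 2 - ‖w - q‖ ^ 2 := by rw [e1]; ring
  match_scalars
  · field_simp
  · field_simp
    linear_combination e3

/-- The two normal forms of a Möbius transformation: a similarity, or the inversion with centre `a`
followed by a similarity. -/
def MobForm {n : ℕ} (g : EuclHat n → EuclHat n) : Prop :=
  (∃ (b : Eucl n) (l : ℝ) (A : Eucl n ≃ₗᵢ[ℝ] Eucl n), 0 < l ∧ g OnePoint.infty = OnePoint.infty ∧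
    ∀ x : Eucl n, g ↑x = ↑(b + l • A x)) ∨
  (∃ (a b : Eucl n) (l : ℝ) (A : Eucl n ≃ₗᵢ[ℝ] Eucl n), 0 < l ∧ g OnePoint.infty = ↑b ∧
    g ↑a = OnePoint.infty ∧ ∀ x : Eucl n, x ≠ a → g ↑x = ↑(b + (l / ‖x - a‖ ^ 2) • A (x - a)))

lemma hyperRefl_coe {n : ℕ} (a : Eucl n) (t : ℝ) (ha : ‖a‖ = 1) (x : Eucl n) :
    hyperRefl n a t ↑x = ↑((2 * t) • a + hypRefl a x) := by
  change ((x - (2 * (⟪x, a⟫_ℝ - t)) • a : Eucl n) : EuclHat n) = _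
  congr 1
  rw [hypRefl_apply, ha, real_inner_comm]
  module

lemma hyperRefl_infty {n : ℕ} (a : Eucl n) (t : ℝ) :
    hyperRefl n a t OnePoint.infty = OnePoint.infty := rfl

lemma sphereRefl_infty {n : ℕ} (c : Eucl n) (r : ℝ) :
    sphereRefl n c r OnePoint.infty = ↑c := rfl

lemma sphereRefl_self {n : ℕ} (c : Eucl n) (r : ℝ) :
    sphereRefl n c r ↑c = OnePoint.infty := by
  change (if c = c then OnePoint.infty else _) = _
  simp

lemma sphereRefl_coe {n : ℕ} (c : Eucl n) (r : ℝ) {v : Eucl n} (hv : v ≠ 0) :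
    sphereRefl n c r ↑(c + v) = ↑(c + (r ^ 2 / ‖v‖ ^ 2) • v) := by
  change (if c + v = c then OnePoint.infty else _) = _
  rw [if_neg (by simpa using hv), add_sub_cancel_left]

lemma mobForm_hyperRefl {n : ℕ} {g : EuclHat n → EuclHat n} (hg : MobForm g) (a : Eucl n) (t : ℝ)
    (ha : ‖a‖ = 1) : MobForm (hyperRefl n a t ∘ g) := by
  rcases hg with ⟨b, l, A, hl, hinf, hx⟩ | ⟨a', b, l, A, hl, hinf, ha', hx⟩
  · refine Or.inl ⟨(2 * t) • a + hypRefl a b, l, A.trans (hypRefl a), hl, ?_, fun x => ?_⟩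
    · simp [hinf, hyperRefl_infty]
    · rw [Function.comp_apply, hx, hyperRefl_coe a t ha, map_add, map_smul, add_assoc]
      rfl
  · refine Or.inr ⟨a', (2 * t) • a + hypRefl a b, l, A.trans (hypRefl a), hl, ?_, ?_, fun x hxa => ?_⟩
    · simp [hinf, hyperRefl_coe a t ha]
    · simp [ha', hyperRefl_infty]
    · rw [Function.comp_apply, hx x hxa, hyperRefl_coe a t ha, map_add, map_smul, add_assoc]
      rfl

lemma mobForm_sphereRefl {n : ℕ} {g : EuclHat n → EuclHat n} (hg : MobForm g) (c : Eucl n) {r : ℝ}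
    (hr : 0 < r) : MobForm (sphereRefl n c r ∘ g) := by
  rcases hg with ⟨b, l, A, hl, hinf, hx⟩ | ⟨a, b, l, A, hl, hinf, ha, hx⟩
  · set a := A.symm (l⁻¹ • (c - b)) with ha
    have hA : ∀ x, b + l • A x = c + l • A (x - a) := fun x => by
      rw [map_sub, ha, A.apply_symm_apply, smul_sub, smul_inv_smul₀ hl.ne']
      abel
    refine Or.inr ⟨a, c, r ^ 2 / l, A, by positivity, ?_, ?_, fun x hxa => ?_⟩
    · simp [hinf, sphereRefl_infty]
    · rw [Function.comp_apply, hx, hA]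
      simp [sphereRefl_self]
    · have h0 : ‖x - a‖ ≠ 0 := norm_ne_zero_iff.2 (sub_ne_zero.2 hxa)
      have hv : l • A (x - a) ≠ 0 := by
        rw [← norm_ne_zero_iff, norm_smul, A.norm_map, Real.norm_of_nonneg hl.le]
        positivity
      rw [Function.comp_apply, hx, hA, sphereRefl_coe c r hv, norm_smul, A.norm_map,
        Real.norm_of_nonneg hl.le, smul_smul]
      congr 3
      field_simp
  · by_cases hbc : b = c
    · subst hbc
      refine Or.inl ⟨b - (r ^ 2 / l) • A a, r ^ 2 / l, A, by positivity, ?_, fun x => ?_⟩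
      · simp [hinf, sphereRefl_self]
      · have e : b - (r ^ 2 / l) • A a + (r ^ 2 / l) • A x = b + (r ^ 2 / l) • A (x - a) := by
          rw [map_sub]
          module
        rw [e, Function.comp_apply]
        by_cases hxa : x = a
        · rw [hxa, ha, sphereRefl_infty]
          simp
        · have h0 : ‖x - a‖ ≠ 0 := norm_ne_zero_iff.2 (sub_ne_zero.2 hxa)
          have hnorm : ‖(l / ‖x - a‖ ^ 2) • A (x - a)‖ = l / ‖x - a‖ := by
            rw [norm_smul, A.norm_map, Real.norm_of_nonneg (by positivity)]
            field_simp
          have hv : (l / ‖x - a‖ ^ 2) • A (x - a) ≠ 0 := by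
            rw [← norm_ne_zero_iff, hnorm]
            positivity
          rw [hx x hxa, sphereRefl_coe b r hv, hnorm, smul_smul]
          congr 3
          field_simp
    · set d := A.symm (l⁻¹ • (b - c)) with hd
      have hAd : b = c + l • A d := by
        rw [hd, A.apply_symm_apply, smul_inv_smul₀ hl.ne']
        abel
      have hd0 : d ≠ 0 := by
        rintro h
        rw [h, map_zero, smul_zero, add_zero] at hAd
        exact hbc hAd
      have hdn : ‖d‖ ≠ 0 := norm_ne_zero_iff.2 hd0
      -- `q` is the image of `-d` under the inversion in the unit sphere
      set q := -((‖d‖ ^ 2)⁻¹ • d) with hq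
      have hqn : ‖q‖ = ‖d‖⁻¹ := by
        rw [hq, norm_neg, norm_smul, norm_inv, norm_pow, norm_norm]
        field_simp
      have hq0 : q ≠ 0 := by
        rw [← norm_ne_zero_iff, hqn]
        positivity
      have hdq : d = -((‖q‖ ^ 2)⁻¹ • q) := by
        rw [hqn, hq, smul_neg, neg_neg, smul_smul]
        field_simp
        simp
      have hqn0 : ‖q‖ ≠ 0 := norm_ne_zero_iff.2 hq0
      refine Or.inr ⟨a + q, c - (r ^ 2 / l) • A q, r ^ 2 / l * ‖q‖ ^ 2, (hypRefl q).trans A,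
        by positivity, ?_, ?_, fun x hxq => ?_⟩
      · have hv : l • A d ≠ 0 := by
          rw [← norm_ne_zero_iff, norm_smul, A.norm_map, Real.norm_of_nonneg hl.le]
          positivity
        rw [Function.comp_apply, hinf, hAd, sphereRefl_coe c r hv, norm_smul, A.norm_map,
          Real.norm_of_nonneg hl.le, hq, map_neg, map_smul, smul_neg, sub_neg_eq_add, smul_smul,
          smul_smul]
        congr 3
        field_simp
      · rw [Function.comp_apply, hx _ (by simpa using hq0), hAd, add_sub_cancel_left]
        have : c + l • A d + (l / ‖q‖ ^ 2) • A q = c := by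
          conv_lhs => rw [hdq, map_neg, map_smul]
          module
        rw [this, sphereRefl_self]
      · rw [Function.comp_apply]
        by_cases hxa : x = a
        · rw [hxa, ha, sphereRefl_infty]
          congr 1
          have e1 : a - (a + q) = -q := by abel
          have e2 : r ^ 2 / l * ‖q‖ ^ 2 / ‖-q‖ ^ 2 = r ^ 2 / l := by
            rw [norm_neg q]
            field_simp
          have e3 : ((hypRefl q).trans A) (-q) = A q := by
            rw [LinearIsometryEquiv.trans_apply, map_neg (hypRefl q), hypRefl_self hq0, neg_neg]
          rw [e1, e2, e3]
          module
        · set w := x - a with hw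
          have hw0 : w ≠ 0 := sub_ne_zero.2 hxa
          have hwn : ‖w‖ ≠ 0 := norm_ne_zero_iff.2 hw0
          have hwq : w ≠ q := fun h => hxq (by rw [← h, hw]; abel)
          have hxw : x - (a + q) = w - q := by rw [hw]; abel
          set v := (‖w‖ ^ 2)⁻¹ • w - (‖q‖ ^ 2)⁻¹ • q with hv
          have hvx : b + (l / ‖w‖ ^ 2) • A w = c + l • A v := by
            have hAd' : A d = -((‖q‖ ^ 2)⁻¹ • A q) := by
              rw [← map_smul A, ← map_neg A, ← hdq]
            have hAv : A v = (‖w‖ ^ 2)⁻¹ • A w - (‖q‖ ^ 2)⁻¹ • A q := by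
              rw [← map_smul A, ← map_smul A, ← map_sub A ((‖w‖ ^ 2)⁻¹ • w)]
            rw [hAd, hAv, hAd']
            module
          have hid := inversion_identity hw0 hq0 hwq
          rw [← hv] at hid
          have hv0 : v ≠ 0 := by
            intro h
            have h4 : (‖w‖ ^ 2)⁻¹ • w = (‖q‖ ^ 2)⁻¹ • q := sub_eq_zero.1 (hv ▸ h)
            have h5 : ‖w‖⁻¹ = ‖q‖⁻¹ := by
              have := congrArg norm h4
              rw [norm_smul, norm_smul, norm_inv, norm_inv, norm_pow, norm_pow, norm_norm,
                norm_norm] at this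
              field_simp at this
              field_simp
              exact this
            rw [← inv_pow, ← inv_pow, h5] at h4
            exact hwq (smul_right_injective _ (by positivity) h4)
          have hvn : ‖v‖ ≠ 0 := norm_ne_zero_iff.2 hv0
          have hlv : l • A v ≠ 0 := by
            rw [← norm_ne_zero_iff, norm_smul, A.norm_map, Real.norm_of_nonneg hl.le]
            positivity
          rw [hx x hxa, hvx, sphereRefl_coe c r hlv, norm_smul, A.norm_map,
            Real.norm_of_nonneg hl.le, hxw]
          congr 1
          have h6 : (r ^ 2 / (l * ‖v‖) ^ 2) • l • A v = (r ^ 2 / l) • A ((‖v‖ ^ 2)⁻¹ • v) := by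
            rw [map_smul, smul_smul, smul_smul]
            congr 1
            field_simp
          rw [h6, hid, map_add, map_neg, map_smul, LinearIsometryEquiv.trans_apply]
          module

lemma mobForm_of_isMobiusHat {n : ℕ} {g : EuclHat n → EuclHat n} (hg : IsMobiusHat n g) :
    MobForm g := by
  obtain ⟨L, -, hL, rfl⟩ := hg
  induction L with
  | nil =>
    exact Or.inl ⟨0, 1, LinearIsometryEquiv.refl ℝ _, one_pos, rfl, fun x => by simp⟩
  | cons f L ih =>
    have ih' := ih fun f hf => hL f (List.mem_cons_of_mem _ hf)
    rw [List.foldr_cons]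
    rcases hL f List.mem_cons_self with ⟨c, r, hr, rfl⟩ | ⟨a, t, ha, rfl⟩
    · exact mobForm_sphereRefl ih' c hr
    · exact mobForm_hyperRefl ih' a t ha

/-! ### Möbius self-maps of the ball and their conformal factors -/

lemma normDeriv_eq {n : ℕ} (hn : 2 ≤ n) {φ : Eucl n → Eucl n} {z : Eucl n} {k : ℝ} (hk : 0 < k)
    (B : Eucl n ≃ₗᵢ[ℝ] Eucl n) (h : HasFDerivAt φ (k • (B : Eucl n →L[ℝ] Eucl n)) z) :
    normDeriv φ z = k := by
  have hM : jacMatrix φ z = LinearMap.toMatrix (EuclideanSpace.basisFun (Fin n) ℝ).toBasis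
      (EuclideanSpace.basisFun (Fin n) ℝ).toBasis
      (k • (B.toLinearEquiv : Eucl n →ₗ[ℝ] Eucl n)) := by
    ext i j
    rw [jacMatrix, Matrix.of_apply, h.fderiv, LinearMap.toMatrix_apply]
    simp [basisV]
  have hB : |LinearMap.det (B.toLinearEquiv : Eucl n →ₗ[ℝ] Eucl n)| = 1 := by
    rw [← LinearMap.normDet_eq_abs_det]
    exact B.toLinearIsometry.normDet_eq_one
  rw [normDeriv, hM, LinearMap.det_toMatrix, LinearMap.det_smul, abs_mul, hB, mul_one,
    finrank_euclideanSpace_fin, abs_of_pos (pow_pos hk n)]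
  exact Real.pow_rpow_inv_natCast hk.le (by omega)

lemma hasFDerivAt_inversion_form {n : ℕ} (a b : Eucl n) {l : ℝ} (hl : 0 < l)
    (A : Eucl n ≃ₗᵢ[ℝ] Eucl n) {z : Eucl n} (hz : z ≠ a) :
    HasFDerivAt (fun z => b + (l / ‖z - a‖ ^ 2) • A (z - a))
      ((l / ‖z - a‖ ^ 2) • (((hypRefl (z - a)).trans A : Eucl n ≃ₗᵢ[ℝ] Eucl n) :
        Eucl n →L[ℝ] Eucl n)) z := by
  have h1 := EuclideanGeometry.hasFDerivAt_inversion (R := √l) hz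
  have h2 := ((A : Eucl n →L[ℝ] Eucl n).hasFDerivAt.comp z (h1.sub_const a)).const_add b
  have e : ∀ w, (√l / dist w a) ^ 2 = l / ‖w - a‖ ^ 2 := fun w => by
    rw [div_pow, Real.sq_sqrt hl.le, dist_eq_norm]
  have hf : (fun z => b + (l / ‖z - a‖ ^ 2) • A (z - a))
      = fun z => b + ((A : Eucl n →L[ℝ] Eucl n) ∘ fun w => EuclideanGeometry.inversion a √l w - a) z := by
    ext1 w
    simp [EuclideanGeometry.inversion, e]
  have hL : (l / ‖z - a‖ ^ 2) • (((hypRefl (z - a)).trans A : Eucl n ≃ₗᵢ[ℝ] Eucl n) :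
      Eucl n →L[ℝ] Eucl n) = (A : Eucl n →L[ℝ] Eucl n) ∘L ((√l / dist z a) ^ 2 •
        ((ℝ ∙ (z - a))ᗮ.reflection : Eucl n →L[ℝ] Eucl n)) := by
    ext1 w
    simp [e, hypRefl]
  rw [hf, hL]
  exact h2

/-- A Möbius self-map of the ball is, near the closed ball, a similarity or an inversion followed by
a similarity, and the centre of the inversion stays away from the closed ball. -/
lemma IsMobiusBall.form {n : ℕ} {φ : Eucl n → Eucl n} (hφ : IsMobiusBall n φ) :
    (∃ (b : Eucl n) (l : ℝ) (A : Eucl n ≃ₗᵢ[ℝ] Eucl n) (U : Set (Eucl n)), 0 < l ∧ IsOpen U ∧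
      closedBall 0 1 ⊆ U ∧ ∀ z ∈ U, φ z = b + l • A z) ∨
    (∃ (a b : Eucl n) (l : ℝ) (A : Eucl n ≃ₗᵢ[ℝ] Eucl n) (U : Set (Eucl n)), 0 < l ∧ IsOpen U ∧
      closedBall 0 1 ⊆ U ∧ a ∉ U ∧ ∀ z ∈ U, φ z = b + (l / ‖z - a‖ ^ 2) • A (z - a)) := by
  obtain ⟨⟨U, hU, hBU, g, hg, hgφ⟩, -⟩ := hφ
  rcases mobForm_of_isMobiusHat hg with ⟨b, l, A, hl, -, hx⟩ | ⟨a, b, l, A, hl, -, ha, hx⟩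
  · exact Or.inl ⟨b, l, A, U, hl, hU, hBU, fun z hz =>
      (OnePoint.coe_injective ((hx z).symm.trans (hgφ z hz))).symm⟩
  · have haU : a ∉ U := fun h => OnePoint.coe_ne_infty _ ((hgφ a h).symm.trans ha)
    exact Or.inr ⟨a, b, l, A, U, hl, hU, hBU, haU, fun z hz =>
      (OnePoint.coe_injective
        ((hx z fun h => haU (h ▸ hz)).symm.trans (hgφ z hz))).symm⟩

lemma IsMobiusBall.continuousAt {n : ℕ} {φ : Eucl n → Eucl n} (hφ : IsMobiusBall n φ) {z : Eucl n}
    (hz : ‖z‖ ≤ 1) : ContinuousAt φ z := by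
  have hz' : z ∈ closedBall (0 : Eucl n) 1 := by simpa using hz
  rcases hφ.form with ⟨b, l, A, U, hl, hU, hBU, h⟩ | ⟨a, b, l, A, U, hl, hU, hBU, haU, h⟩
  · have hc : ContinuousAt (fun z => b + l • A z) z := by fun_prop
    exact hc.congr (Filter.eventually_of_mem (hU.mem_nhds (hBU hz')) fun w hw => (h w hw).symm)
  · have hza : z ≠ a := fun e => haU (e ▸ hBU hz')
    exact (hasFDerivAt_inversion_form a b hl A hza).continuousAt.congr
      (Filter.eventually_of_mem (hU.mem_nhds (hBU hz')) fun w hw => (h w hw).symm)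

lemma IsMobiusBall.norm_le {n : ℕ} {φ : Eucl n → Eucl n} (hφ : IsMobiusBall n φ) {z : Eucl n}
    (hz : ‖z‖ ≤ 1) : ‖φ z‖ ≤ 1 := by
  have hmaps : MapsTo φ (closure (uBall n)) (closure (uBall n)) := by
    refine hφ.2.mapsTo.closure_of_continuousOn fun w hw => (hφ.continuousAt ?_).continuousWithinAt
    rw [uBall, closure_ball _ one_ne_zero] at hw
    simpa using hw
  rw [uBall, closure_ball _ one_ne_zero] at hmaps
  simpa using hmaps (show z ∈ closedBall 0 1 by simpa using hz)

/-- A quadratic polynomial vanishing at `p`, rewritten around `p`. -/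
lemma quad_shift {n : ℕ} (c d : ℝ) (v a p z : Eucl n)
    (hp : c * ‖p - a‖ ^ 2 + ⟪v, p - a⟫_ℝ + d = 0) :
    c * ‖z - a‖ ^ 2 + ⟪v, z - a⟫_ℝ + d
      = c * ‖z - p‖ ^ 2 + ⟪(2 * c) • (p - a) + v, z - p⟫_ℝ := by
  have e : z - a = (z - p) + (p - a) := by abel
  rw [e, norm_add_sq_real, inner_add_right, inner_add_left, real_inner_smul_left,
    real_inner_comm (p - a) (z - p)]
  linear_combination hp

/-- The conformal covariance of the extended Poisson kernel: `k` and `κ` play the role of the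
conformal factors at `z` and at the pole `p`. -/
lemma extPoisson_eq_polKer_of {n : ℕ} {x w z p β : Eucl n} {k κ α : ℝ} (hx : x ≠ 0) (hk : 0 < k)
    (hκ : 0 < κ) (h1 : ‖w - (‖x‖ ^ 2)⁻¹ • x‖ ^ 2 = κ * k * ‖z - p‖ ^ 2)
    (h2 : 1 - ‖x‖ ^ 2 * ‖w‖ ^ 2 = k * (α * ‖z - p‖ ^ 2 + ⟪β, z - p⟫_ℝ)) :
    k ^ (((n : ℝ) - 2) / 2) * extPoisson n x w
      = polKer ((‖x‖ ^ 2 * κ) ^ (-((n : ℝ) / 2)) * α) ((‖x‖ ^ 2 * κ) ^ (-((n : ℝ) / 2)) • β) p z := by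
  have hx0 : 0 < ‖x‖ := norm_pos_iff.2 hx
  rw [extPoisson, extPoisson_denom hx, h1, polKer, real_inner_smul_left, mul_comm (‖w‖ ^ 2), h2,
    show ‖x‖ ^ 2 * (κ * k * ‖z - p‖ ^ 2) = k * (‖x‖ ^ 2 * κ) * ‖z - p‖ ^ 2 by ring,
    Real.mul_rpow (by positivity) (by positivity), Real.mul_rpow (by positivity) (by positivity),
    Real.rpow_neg (by positivity), Real.rpow_neg (by positivity),
    div_eq_mul_inv (k * (α * ‖z - p‖ ^ 2 + ⟪β, z - p⟫_ℝ)), mul_inv, mul_inv]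
  have hkk : k ^ (((n : ℝ) - 2) / 2) * k * (k ^ ((n : ℝ) / 2))⁻¹ = 1 := by
    rw [← Real.rpow_neg hk.le, ← Real.rpow_add_one hk.ne', ← Real.rpow_add hk]
    ring_nf
    exact Real.rpow_zero k
  linear_combination (α * ‖z - p‖ ^ 2 + ⟪β, z - p⟫_ℝ) * ((‖x‖ ^ 2 * κ) ^ ((n : ℝ) / 2))⁻¹ *
    ((‖z - p‖ ^ 2) ^ ((n : ℝ) / 2))⁻¹ * hkk

lemma norm_dual {n : ℕ} {x : Eucl n} (hx : x ≠ 0) : ‖(‖x‖ ^ 2)⁻¹ • x‖ = ‖x‖⁻¹ := by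
  have hx0 : ‖x‖ ≠ 0 := norm_ne_zero_iff.2 hx
  rw [norm_smul, norm_inv, norm_pow, norm_norm]
  field_simp

/-- `ψ · (P_x ∘ φ)` is a Poisson-type kernel whose pole lies outside the closed ball.  One point `x`
(other than `0`) has to be left out: the one for which the pole is at infinity. -/
lemma IsMobiusBall.wco_extPoisson {n : ℕ} (hn : 2 ≤ n) {φ : Eucl n → Eucl n}
    (hφ : IsMobiusBall n φ) :
    ∃ e : Eucl n, ∀ x : Eucl n, ‖x‖ < 1 → x ≠ 0 → (‖x‖ ^ 2)⁻¹ • x ≠ e →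
      ∃ (α : ℝ) (β p : Eucl n), 1 < ‖p‖ ∧ ∀ z : Eucl n, ‖z‖ ≤ 1 →
        normDeriv φ z ^ (((n : ℝ) - 2) / 2) * extPoisson n x (φ z) = polKer α β p z := by
  rcases hφ.form with ⟨b, l, A, U, hl, hU, hBU, h⟩ | ⟨a, b, l, A, U, hl, hU, hBU, haU, h⟩
  · refine ⟨0, fun x hx1 hx0 _ => ?_⟩
    have hxn : 0 < ‖x‖ := norm_pos_iff.2 hx0
    set s := (‖x‖ ^ 2)⁻¹ • x with hs
    have hsn : ‖s‖ = ‖x‖⁻¹ := norm_dual hx0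
    set p := A.symm (l⁻¹ • (s - b)) with hp
    have hFp : b + l • A p = s := by
      rw [hp, A.apply_symm_apply, smul_inv_smul₀ hl.ne']
      abel
    have hNp : ∀ z, 1 - ‖x‖ ^ 2 * ‖b + l • A z‖ ^ 2
        = (-(‖x‖ ^ 2 * l ^ 2)) * ‖z - 0‖ ^ 2 + ⟪(-(2 * ‖x‖ ^ 2 * l)) • A.symm b, z - 0⟫_ℝ
          + (1 - ‖x‖ ^ 2 * ‖b‖ ^ 2) := fun z => by
      have : ⟪A.symm b, z⟫_ℝ = ⟪b, A z⟫_ℝ := by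
        rw [← A.inner_map_map, A.apply_symm_apply]
      rw [norm_add_sq_real, norm_smul, A.norm_map, Real.norm_of_nonneg hl.le, inner_smul_right,
        sub_zero, real_inner_smul_left, this]
      ring
    -- `φ` preserves the closed ball, while `φ p = s` would be outside of it
    have hp1 : 1 < ‖p‖ := by
      by_contra hc
      have hpU := hBU (show p ∈ closedBall 0 1 by simpa using hc)
      have := hφ.norm_le (not_lt.1 hc)
      rw [h p hpU, hFp, hsn] at this
      exact absurd this (not_le.2 ((one_lt_inv₀ hxn).2 hx1))
    have hN0 := hNp p
    rw [hFp, hsn, ← mul_pow, mul_inv_cancel₀ hxn.ne', one_pow, sub_self] at hN0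
    refine ⟨(‖x‖ ^ 2 * l) ^ (-((n : ℝ) / 2)) * (l⁻¹ * -(‖x‖ ^ 2 * l ^ 2)),
      (‖x‖ ^ 2 * l) ^ (-((n : ℝ) / 2)) •
        l⁻¹ • ((2 * -(‖x‖ ^ 2 * l ^ 2)) • (p - 0) + (-(2 * ‖x‖ ^ 2 * l)) • A.symm b),
      p, hp1, fun z hz => ?_⟩
    have hzU := hBU (show z ∈ closedBall 0 1 by simpa using hz)
    have hd : HasFDerivAt φ (l • (A : Eucl n →L[ℝ] Eucl n)) z := by
      have h1 : HasFDerivAt (fun z => b + l • A z) (l • (A : Eucl n →L[ℝ] Eucl n)) z :=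
        ((A : Eucl n →L[ℝ] Eucl n).hasFDerivAt.const_smul l).const_add b
      exact h1.congr_of_eventuallyEq (Filter.eventually_of_mem (hU.mem_nhds hzU) h)
    rw [normDeriv_eq hn hl A hd]
    refine extPoisson_eq_polKer_of hx0 hl hl ?_ ?_
    · have e : φ z - s = l • A (z - p) := by
        rw [h z hzU, ← hFp, map_sub, smul_sub]
        abel
      rw [← hs, e, norm_smul, A.norm_map, Real.norm_of_nonneg hl.le]
      ring
    · rw [h z hzU, hNp, quad_shift _ _ _ _ p z hN0.symm, real_inner_smul_left]
      field_simp
  · refine ⟨b, fun x hx1 hx0 hxb => ?_⟩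
    have hxn : 0 < ‖x‖ := norm_pos_iff.2 hx0
    set s := (‖x‖ ^ 2)⁻¹ • x with hs
    have hsn : ‖s‖ = ‖x‖⁻¹ := norm_dual hx0
    have hsb : 0 < ‖s - b‖ := norm_pos_iff.2 (sub_ne_zero.2 hxb)
    set u := (l / ‖s - b‖ ^ 2) • A.symm (s - b) with hu
    have hun : ‖u‖ = l / ‖s - b‖ := by
      rw [hu, norm_smul, A.symm.norm_map, Real.norm_of_nonneg (by positivity)]
      field_simp
    have hu0 : 0 < ‖u‖ := by rw [hun]; positivity
    set p := a + u with hp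
    have hpa : p - a = u := by rw [hp]; abel
    have hpa' : p ≠ a := fun e => by
      rw [e, sub_self] at hpa
      exact hu0.ne' (by rw [← hpa, norm_zero])
    have hFp : b + (l / ‖p - a‖ ^ 2) • A (p - a) = s := by
      have e : A u = (l / ‖s - b‖ ^ 2) • (s - b) := by
        rw [hu, map_smul, A.apply_symm_apply]
      have e2 : l / (l / ‖s - b‖) ^ 2 * (l / ‖s - b‖ ^ 2) = 1 := by field_simp
      rw [hpa, hun, e, smul_smul, e2, one_smul]
      abel
    have hNp : ∀ z, z ≠ a → 1 - ‖x‖ ^ 2 * ‖b + (l / ‖z - a‖ ^ 2) • A (z - a)‖ ^ 2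
        = (‖z - a‖ ^ 2)⁻¹ * ((1 - ‖x‖ ^ 2 * ‖b‖ ^ 2) * ‖z - a‖ ^ 2
          + ⟪(-(2 * ‖x‖ ^ 2 * l)) • A.symm b, z - a⟫_ℝ + -(‖x‖ ^ 2 * l ^ 2)) := fun z hz => by
      have hz0 : 0 < ‖z - a‖ := norm_pos_iff.2 (sub_ne_zero.2 hz)
      have : ⟪A.symm b, z - a⟫_ℝ = ⟪b, A (z - a)⟫_ℝ := by
        rw [← A.inner_map_map, A.apply_symm_apply]
      rw [norm_add_sq_real, norm_smul, A.norm_map, Real.norm_of_nonneg (by positivity),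
        inner_smul_right, real_inner_smul_left, this]
      field_simp
      ring
    -- `φ` preserves the closed ball, while `φ p = s` would be outside of it
    have hp1 : 1 < ‖p‖ := by
      by_contra hc
      have hpU := hBU (show p ∈ closedBall 0 1 by simpa using hc)
      have := hφ.norm_le (not_lt.1 hc)
      rw [h p hpU, hFp, hsn] at this
      exact absurd this (not_le.2 ((one_lt_inv₀ hxn).2 hx1))
    have hN0 := hNp p hpa'
    rw [hFp, hsn, ← mul_pow, mul_inv_cancel₀ hxn.ne', one_pow, sub_self] at hN0
    have hN1 := (mul_eq_zero.1 hN0.symm).resolve_left (by rw [hpa]; positivity)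
    refine ⟨(‖x‖ ^ 2 * (l / ‖p - a‖ ^ 2)) ^ (-((n : ℝ) / 2)) * (l⁻¹ * (1 - ‖x‖ ^ 2 * ‖b‖ ^ 2)),
      (‖x‖ ^ 2 * (l / ‖p - a‖ ^ 2)) ^ (-((n : ℝ) / 2)) •
        l⁻¹ • ((2 * (1 - ‖x‖ ^ 2 * ‖b‖ ^ 2)) • (p - a) + (-(2 * ‖x‖ ^ 2 * l)) • A.symm b),
      p, hp1, fun z hz => ?_⟩
    have hzU := hBU (show z ∈ closedBall 0 1 by simpa using hz)
    have hza : z ≠ a := fun e => haU (e ▸ hzU)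
    have hz0 : 0 < ‖z - a‖ := norm_pos_iff.2 (sub_ne_zero.2 hza)
    have hd := (hasFDerivAt_inversion_form a b hl A hza).congr_of_eventuallyEq
      (Filter.eventually_of_mem (hU.mem_nhds hzU) h)
    rw [normDeriv_eq hn (by positivity) _ hd]
    refine extPoisson_eq_polKer_of hx0 (by positivity) (κ := l / ‖p - a‖ ^ 2)
      (by rw [hpa]; positivity) ?_ ?_
    · have hpa0 : 0 < ‖p - a‖ := by rw [hpa]; exact hu0
      have e : φ z - s = A ((l / ‖z - a‖ ^ 2) • (z - a) - (l / ‖p - a‖ ^ 2) • (p - a)) := by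
        rw [h z hzU, ← hFp, map_sub A ((l / ‖z - a‖ ^ 2) • (z - a)), map_smul A, map_smul A]
        abel
      have e2 : ‖z - p‖ ^ 2 = ‖z - a‖ ^ 2 - 2 * ⟪z - a, p - a⟫_ℝ + ‖p - a‖ ^ 2 := by
        rw [← norm_sub_sq_real]
        congr 2
        abel
      rw [← hs, e, A.norm_map, norm_sub_sq_real, e2, norm_smul, norm_smul, real_inner_smul_left,
        real_inner_smul_right, Real.norm_of_nonneg (by positivity),
        Real.norm_of_nonneg (by positivity)]
      field_simp
      ring
    · rw [h z hzU, hNp z hza, quad_shift _ _ _ _ p z hN1, real_inner_smul_left]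
      field_simp

/-! ### The adjoint on Poisson kernels -/

lemma eventually_ne_nhdsNE {n : ℕ} (c x : Eucl n) : ∀ᶠ w in 𝓝[≠] x, w ≠ c := by
  by_cases h : x = c
  · exact h ▸ self_mem_nhdsWithin
  · exact (eventually_ne_nhds h).filter_mono nhdsWithin_le_nhds

lemma eq_of_eq_off_two {n : ℕ} (hn : 2 ≤ n) {f g : Eucl n → ℂ} (hf : ContinuousOn f (uBall n))
    (hg : ContinuousOn g (uBall n)) (c d : Eucl n)
    (h : ∀ w ∈ uBall n, w ≠ c → w ≠ d → f w = g w) {x : Eucl n} (hx : x ∈ uBall n) : f x = g x := by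
  have : Nontrivial (Fin n) := Fin.nontrivial_iff_two_le.2 hn
  have : (𝓝[≠] x).NeBot := Module.punctured_nhds_neBot ℝ (Eucl n) x
  have hU : uBall n ∈ 𝓝 x := isOpen_ball.mem_nhds hx
  have h1 : Tendsto f (𝓝[≠] x) (𝓝 (f x)) := (hf.continuousAt hU).tendsto.mono_left nhdsWithin_le_nhds
  have h2 : Tendsto g (𝓝[≠] x) (𝓝 (g x)) := (hg.continuousAt hU).tendsto.mono_left nhdsWithin_le_nhds
  refine tendsto_nhds_unique (h1.congr' ?_) h2
  filter_upwards [eventually_ne_nhdsNE c x, eventually_ne_nhdsNE d x,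
    nhdsWithin_le_nhds hU] with w hc hd hw using h w hw hc hd

/-- The reproducing computation: if `W P_x` extends to a continuous function on the closed ball, then
`W* P_y (x) = W P_x (y)`. -/
lemma adjoint_apply {n : ℕ} (hn : 2 ≤ n) {p q : ℝ≥0∞} (hq : 1 < q) {φ : Eucl n → Eucl n}
    {ψ : Eucl n → ℂ} {bd : (Eucl n → ℂ) → (Eucl n → ℂ)}
    (hbd : ∀ f, MemHp n p f ∨ MemHp n q f →
      ∀ᵐ ζ ∂(sphMeasure n), HasNTLimit n f ζ (bd f ζ))
    {Wstar : (Eucl n → ℂ) → (Eucl n → ℂ)}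
    (hWmaps : ∀ g, MemHp n q g → MemHp n q (Wstar g))
    (hadj : ∀ f g, MemHp n p f → MemHp n q g →
      hpPairing n bd (wco φ ψ f) g = hpPairing n bd f (Wstar g))
    {x y : Eucl n} (hx : ‖x‖ < 1) (hy : ‖y‖ < 1) {K : Eucl n → ℂ} (hK : HarmOn K (uBall n))
    (hKc : ∀ ζ, ‖ζ‖ ≤ 1 → ContinuousAt K ζ)
    (hWK : EqOn (wco φ ψ fun z => ((extPoisson n x z : ℝ) : ℂ)) K (uBall n)) :
    Wstar (fun z => ((extPoisson n y z : ℝ) : ℂ)) x = K y := by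
  set Px : Eucl n → ℂ := fun z => ((extPoisson n x z : ℝ) : ℂ) with hPx
  set Py : Eucl n → ℂ := fun z => ((extPoisson n y z : ℝ) : ℂ) with hPy
  have hmx : MemHp n p Px := memHp_extPoisson hn hx p
  have hmy : MemHp n q Py := memHp_extPoisson hn hy q
  have hmW : MemHp n p (wco φ ψ Px) :=
    memHp_of_continuous hn (harmOn_congr isOpen_ball hK hWK) hWK
      (fun z hz => (hKc z (by simpa using hz)).continuousWithinAt) p
  have hmS := hWmaps Py hmy
  have hcont : ∀ {a : Eucl n}, ‖a‖ < 1 → ∀ {ζ : Eucl n}, ‖ζ‖ = 1 →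
      ContinuousAt (fun z => ((extPoisson n a z : ℝ) : ℂ)) ζ := fun ha ζ hζ =>
    continuousAt_extPoisson (by rwa [hζ, one_mul])
  have hl : hpPairing n bd (wco φ ψ Px) Py = K y := by
    rw [← poisson_formula_continuous hn hK hKc hy, hpPairing]
    refine integral_congr_ae ?_
    filter_upwards [ae_sphere n, hbd _ (Or.inl hmW), hbd _ (Or.inr hmy)] with ζ hζ h1 h2
    rw [nt_eq_of_continuousAt hζ h1 hWK (hKc ζ hζ.le),
      nt_eq_of_continuousAt hζ h2 (fun _ _ => rfl) (hcont hy hζ)]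
  have hr : hpPairing n bd Px (Wstar Py) = Wstar Py x := by
    rw [← poisson_bd hn hq hmS (hbd _ (Or.inr hmS)) hx, hpPairing]
    refine integral_congr_ae ?_
    filter_upwards [ae_sphere n, hbd _ (Or.inl hmx)] with ζ hζ h1
    rw [nt_eq_of_continuousAt hζ h1 (fun _ _ => rfl) (hcont hx hζ), mul_comm]
  rw [← hr, ← hadj Px Py hmx hmy, hl]

/-- Lemma 4.1: For `n ≥ 2`, `1 ≤ p < ∞`, `φ ∈ Möb(B)`,
`ψ = |Dφ|^{(n−2)/2}`, and `W*` the adjoint of `W_{φ,ψ}` on `h^{p′}(B)` with respect to the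
pairing `⟨f,g⟩ = ∫_S f* g* dσ`, one has `W* P_y = ψ(y)·P_{φ(y)}` for every `y ∈ B`. -/
theorem adjoint_wco_extPoisson (n : ℕ) (hn : 2 ≤ n)
    (p q : ℝ≥0∞) (hp : 1 ≤ p) (hpfin : p ≠ ⊤) (hpq : p⁻¹ + q⁻¹ = 1)
    (φ : Eucl n → Eucl n) (hφ : IsMobiusBall n φ)
    (ψ : Eucl n → ℂ)
    (hψ : ∀ x, ψ x = (↑(normDeriv φ x ^ (((n : ℝ) - 2) / 2)) : ℂ))
    (bd : (Eucl n → ℂ) → (Eucl n → ℂ))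
    (hbd : ∀ f, MemHp n p f ∨ MemHp n q f →
      ∀ᵐ ζ ∂(sphMeasure n), HasNTLimit n f ζ (bd f ζ))
    (Wstar : (Eucl n → ℂ) → (Eucl n → ℂ))
    (hWmaps : ∀ g, MemHp n q g → MemHp n q (Wstar g))
    (hadj : ∀ f g, MemHp n p f → MemHp n q g →
      hpPairing n bd (wco φ ψ f) g = hpPairing n bd f (Wstar g))
    (y : Eucl n) (hy : y ∈ uBall n) :
    ∀ x ∈ uBall n,
      Wstar (fun z => (↑(extPoisson n y z) : ℂ)) x =
        ψ y * (↑(extPoisson n (φ y) x) : ℂ) := by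
  intro x hx
  have hq : 1 < q := by
    by_contra hc
    have h1 : 1 ≤ q⁻¹ := ENNReal.one_le_inv.2 (not_lt.1 hc)
    have h2 : 0 < p⁻¹ := ENNReal.inv_pos.2 hpfin
    have h3 : (0 : ℝ≥0∞) + 1 < p⁻¹ + q⁻¹ := ENNReal.add_lt_add_of_lt_of_le (by simp) h2 h1
    rw [hpq, zero_add] at h3
    exact lt_irrefl _ h3
  have hy1 : ‖y‖ < 1 := mem_uBall.1 hy
  have hφy : ‖φ y‖ < 1 := mem_uBall.1 (hφ.2.mapsTo hy)
  obtain ⟨e, he⟩ := hφ.wco_extPoisson hn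
  refine eq_of_eq_off_two hn (hWmaps _ (memHp_extPoisson hn hy1 q)).1.1.continuousOn
    (continuousOn_const.mul (harmOn_extPoisson hφy.le).1.continuousOn) 0 ((‖e‖ ^ 2)⁻¹ • e)
    (fun w hw hw0 hwe => ?_) hx
  have hw1 : ‖w‖ < 1 := mem_uBall.1 hw
  have hwn : ‖w‖ ≠ 0 := norm_ne_zero_iff.2 hw0
  -- inversion in the unit sphere is an involution, so `w` is not the inverse point of `e`
  obtain ⟨α, β, s, hs, hform⟩ := he w hw1 hw0 fun h => hwe (by
    rw [← h, norm_dual hw0, smul_smul, inv_pow, inv_inv, mul_inv_cancel₀ (by positivity), one_smul])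
  have hWK : EqOn (wco φ ψ fun z => ((extPoisson n w z : ℝ) : ℂ))
      (fun z => ((polKer α β s z : ℝ) : ℂ)) (uBall n) := fun z hz => by
    simp only [wco, hψ]
    rw [← hform z (mem_uBall.1 hz).le, Complex.ofReal_mul]
  have hsU : s ∉ uBall n := fun h => absurd (mem_uBall.1 h) (not_lt.2 hs.le)
  rw [adjoint_apply hn hq hbd hWmaps hadj hw1 hy1 (harmOn_polKer α β s hsU)
    (fun ζ hζ => continuousAt_polKer α β s fun h => absurd hs (not_lt.2 (h ▸ hζ))) hWK]
  refine (hWK hy).symm.trans ?_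
  simp only [wco, Pi.mul_apply, extPoisson_comm w (φ y)]
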